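/- arXiv:2605.19434 — 2 statements merged into one kernel-verified Lean document; each statement's English description precedes it below -/
import Mathlib

section
/- For every r ≥ 1 there exist pairwise disjoint lines in ℙ³ with ideals P₁,…,P_r and a linear form L ∈ [R]₁ with L ∉ Pᵢ for every i, such that, with J = ⋂_{i=1}^r (Pᵢ + (L²)), for every k ≥ 0 at least one of the following holds: [J]_k = L²·[R]_{k−2}, or dim_K [R/J]_k = 2r. (Equivalently, H⁰(𝓘_{Z₂|H²}(k)) and H¹(𝓘_{Z₂}(k)) are never simultaneously nonzero for Z₂ = C ∩ H².) -/
/-!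
Take `L = x₃`, so that `H = V(x₃)`, and let each line pass through a point `(1, a, b, 0)` of `H` and
a point `(0, m, n, 1)`; its ideal is `(x₁ - a x₀ - m x₃, x₂ - b x₀ - n x₃)`. A form lies in
`P + (x₃²)` iff its value and its derivative in the direction `(0, m, n, 1)` vanish at `(1, a, b, 0)`
(`mem_scheme_iff`). In each degree this gives `2r` functionals on forms modulo `x₃²`, and the claim is
that they have maximal rank: independent, or cutting out only the multiples of `x₃²`.

The points `(a, b)` are integral: the full triangle `a + b < k₀` together with part of the diagonal
`a + b = k₀` (`GoodSet`). Products of falling factorials in `x₁`, `x₂`, times `1` or `x₃`, form a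
Newton basis, for which the functionals are triangular. In degrees other than `k₀` this settles the
matter whatever the directions `(m, n)` are (`surj_high`, `inj_low`).

In degree `k₀` the diagonal points carry derivative conditions with no Newton form `x₃ · (…)` of their
own. Give diagonal points the direction `(1, 0)` and all others `(0, 0)`. Then the derivative at
the diagonal point `(a, b)` is nonzero on the Newton form of index `(a + 1, b - 1)`, and pairing
the two makes the system triangular again. The diagonal points are chosen so that either all the
conditions are paired with distinct forms or all the forms are paired (`crit_dichotomy`).

These special lines are not pairwise skew, so the directions are moved to
`(m, n) = (δ, 0) + t (-b, a)`. Maximal rank persists for all but finitely many `t`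
(`finite_bad_pencil`, `crit_finite_bad`). Two of the lines are skew unless a determinant vanishes; it
is affine in `t` with leading coefficient the squared distance of the two grid points, so it vanishes
for at most one `t`. Since `K` is infinite, a suitable `t` exists.
-/

open MvPolynomial Module

noncomputable section

abbrev Rp (K : Type) [Field K] := MvPolynomial (Fin 4) K

/-! ### Pencils of linear maps and triangular systems -/

section LinearAlgebra

variable {K V W ι : Type*} [Field K] [AddCommGroup V] [Module K V] [AddCommGroup W] [Module K W]

/-- Surjectivity and kernel are generically stable along a pencil `Φ + t Ψ`. Let `G` be a generalized
inverse of `Φ`, so `Φ G Φ = Φ`. Then `(Φ + t Ψ) G Φ = (1 + t Ψ G) Φ` if `Φ` is onto, and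
`Φ + t Ψ = (1 + t Ψ G) Φ` if `ker Φ ≤ ker Ψ`; the endomorphism `1 + t Ψ G` of the finite-dimensional
space `W` is injective unless `-1/t` is an eigenvalue of `Ψ G`. -/
lemma finite_bad_pencil [FiniteDimensional K W] (Φ Ψ : V →ₗ[K] W) :
    {t : K | ¬ ((Function.Surjective Φ → Function.Surjective (Φ + t • Ψ)) ∧
      (LinearMap.ker Φ ≤ LinearMap.ker Ψ →
        LinearMap.ker (Φ + t • Ψ) ≤ LinearMap.ker Φ))}.Finite := by
  obtain ⟨G₀, hG₀⟩ := Φ.rangeRestrict.exists_rightInverse_of_surjective Φ.range_rangeRestrict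
  obtain ⟨G, hG⟩ := LinearMap.exists_extend G₀
  have hΦG : ∀ v, Φ (G (Φ v)) = Φ v := by
    intro v
    have h1 : G (Φ v) = G₀ (Φ.rangeRestrict v) := by
      rw [← hG]; rfl
    have h2 := congrArg Subtype.val (LinearMap.congr_fun hG₀ (Φ.rangeRestrict v))
    rw [h1]
    simpa using h2
  let N : Module.End K W := Ψ ∘ₗ G
  refine (N.finite_hasEigenvalue.image (fun μ => -μ⁻¹)).subset ?_
  intro t ht
  by_contra hcon
  apply ht
  have hinj : Function.Injective (LinearMap.id + t • N : W →ₗ[K] W) := by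
    rw [← LinearMap.ker_eq_bot, LinearMap.ker_eq_bot']
    intro w hw
    by_contra hw0
    have hw' : w + t • N w = 0 := by simpa using hw
    have ht0 : t ≠ 0 := by
      rintro rfl
      apply hw0
      simpa using hw'
    apply hcon
    refine ⟨-t⁻¹, ?_, by simp⟩
    refine Module.End.hasEigenvalue_of_hasEigenvector (x := w)
      ⟨Module.End.mem_eigenspace_iff.2 ?_, hw0⟩
    have : N w = t⁻¹ • (t • N w) := by rw [smul_smul, inv_mul_cancel₀ ht0, one_smul]
    rw [this, eq_neg_of_add_eq_zero_right hw']
    simp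
  constructor
  · intro hs
    have hsurj := LinearMap.injective_iff_surjective.1 hinj
    intro w
    obtain ⟨u, hu⟩ := hsurj w
    obtain ⟨v, rfl⟩ := hs u
    refine ⟨G (Φ v), ?_⟩
    rw [← hu]
    simp [N, hΦG]
  · intro hk v hv
    have h1 : Ψ (G (Φ v)) = Ψ v := by
      have : G (Φ v) - v ∈ LinearMap.ker Φ := by simp [hΦG]
      have := hk this
      rw [LinearMap.mem_ker, map_sub, sub_eq_zero] at this
      exact this
    rw [LinearMap.mem_ker] at hv ⊢
    apply hinj
    rw [map_zero, ← hv]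
    simp [N, h1]

variable [Fintype ι] {α : Type*} [LinearOrder α]

/-- A square system that is triangular for some ranking of the indices has trivial kernel. -/
lemma tri_injective (M : ι → ι → K) (ρ : ι → α) (h1 : ∀ i, M i i ≠ 0)
    (h0 : ∀ i j, i ≠ j → ρ i ≤ ρ j → M i j = 0) (x : ι → K)
    (hx : ∀ i, ∑ j, x j * M i j = 0) : x = 0 := by
  classical
  by_contra hne
  have hs : (Finset.univ.filter fun i => x i ≠ 0).Nonempty := by
    obtain ⟨i, hi⟩ := Function.ne_iff.1 hne
    exact ⟨i, by simpa using hi⟩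
  obtain ⟨i, hi, hmin⟩ := Finset.exists_min_image _ ρ hs
  have hxi : x i ≠ 0 := by simpa using hi
  have := hx i
  rw [Finset.sum_eq_single i] at this
  · exact mul_ne_zero hxi (h1 i) this
  · intro j _ hj
    by_cases hxj : x j = 0
    · simp [hxj]
    · rw [h0 i j hj.symm (hmin j (by simpa using hxj)), mul_zero]
  · simp

lemma tri_surjective (φ : ι → V →ₗ[K] K) (e : ι → V) (ρ : ι → α) (h1 : ∀ i, φ i (e i) ≠ 0)
    (h0 : ∀ i j, i ≠ j → ρ i ≤ ρ j → φ i (e j) = 0) (y : ι → K) :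
    ∃ x : ι → K, ∀ i, φ i (∑ j, x j • e j) = y i := by
  let T : (ι → K) →ₗ[K] (ι → K) :=
    LinearMap.pi fun i => φ i ∘ₗ (Fintype.linearCombination K e)
  have hT : ∀ x i, T x i = φ i (∑ j, x j • e j) := by
    intro x i
    simp [T, Fintype.linearCombination_apply]
  have hinj : Function.Injective T := by
    rw [← LinearMap.ker_eq_bot, LinearMap.ker_eq_bot']
    intro x hx
    refine tri_injective (fun i j => φ i (e j)) ρ h1 h0 x fun i => ?_
    have := hT x i
    rw [hx] at this
    simpa using this.symm
  obtain ⟨x, hx⟩ := LinearMap.injective_iff_surjective.1 hinj y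
  exact ⟨x, fun i => by rw [← hT, hx]⟩

lemma tri_eq_zero (φ : ι → V →ₗ[K] K) (e : ι → V) (ρ : ι → α) (h1 : ∀ i, φ i (e i) ≠ 0)
    (h0 : ∀ i j, i ≠ j → ρ i ≤ ρ j → φ i (e j) = 0) (v : V)
    (hv : v ∈ Submodule.span K (Set.range e)) (hφ : ∀ i, φ i v = 0) : v = 0 := by
  obtain ⟨x, rfl⟩ := (Submodule.mem_span_range_iff_exists_fun K).1 hv
  have := tri_injective (fun i j => φ i (e j)) ρ h1 h0 x fun i => by simpa using hφ i
  simp [this]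

end LinearAlgebra

/-! ### Lines, point conditions and the ideals `P + (x₃²)` -/

section Polynomials

variable {K : Type} [Field K]

/-- A filtration of `R` stable under multiplication by the variables contains the grading. -/
lemma homogeneous_le (M : ℕ → Submodule K (Rp K)) (h0 : (1 : Rp K) ∈ M 0)
    (hX : ∀ (i : Fin 4) k, ∀ f ∈ M k, X i * f ∈ M (k + 1)) (k : ℕ) :
    homogeneousSubmodule (Fin 4) K k ≤ M k := by
  induction k with
  | zero =>
    rw [homogeneousSubmodule_zero, Submodule.one_le]
    exact h0
  | succ k ih =>
    rw [← homogeneousSubmodule_one_pow, pow_succ', homogeneousSubmodule_one_pow,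
      homogeneousSubmodule_one_eq_span_X, Submodule.mul_le]
    intro m hm n hn
    induction hm using Submodule.span_induction with
    | mem x hx => obtain ⟨i, rfl⟩ := hx; exact hX i k n (ih hn)
    | zero => simp
    | add x y _ _ hx hy => rw [add_mul]; exact add_mem hx hy
    | smul c x _ hx => rw [smul_mul_assoc]; exact Submodule.smul_mem _ _ hx

/-- The point `(1 : a : b : 0)` of the plane `H = V(x₃)`, in coordinates. -/
def pt (a b : K) : Fin 4 → K := ![1, a, b, 0]

/-- The value of a form at `(1, a, b, 0)`. -/
def evA (a b : K) : Rp K →ₗ[K] K := (aeval (pt a b)).toLinearMap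

/-- The derivative of a form at `(1, a, b, 0)` in the direction `(0, m, n, 1)`. -/
def evB (a b m n : K) : Rp K →ₗ[K] K :=
  evA a b ∘ₗ ((pderiv 3 : Derivation K (Rp K) (Rp K)).toLinearMap +
    m • (pderiv 1 : Derivation K (Rp K) (Rp K)).toLinearMap +
    n • (pderiv 2 : Derivation K (Rp K) (Rp K)).toLinearMap)

/-- The derivative of a form at `(1, a, b, 0)` in the direction `(0, m, n, 0)` tangent to `H`. -/
def evT (a b m n : K) : Rp K →ₗ[K] K :=
  evA a b ∘ₗ (m • (pderiv 1 : Derivation K (Rp K) (Rp K)).toLinearMap +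
    n • (pderiv 2 : Derivation K (Rp K) (Rp K)).toLinearMap)

/-- The first of the two forms cutting out the line through `(1, a, b, 0)` and `(0, m, n, 1)`. -/
def form1 (a m : K) : Rp K := X 1 - C a * X 0 - C m * X 3

/-- The second of the two forms cutting out the line through `(1, a, b, 0)` and `(0, m, n, 1)`. -/
def form2 (b n : K) : Rp K := X 2 - C b * X 0 - C n * X 3

lemma evA_mul (a b : K) (f g : Rp K) : evA a b (f * g) = evA a b f * evA a b g := by
  simp [evA]

lemma evB_mul (a b m n : K) (f g : Rp K) :
    evB a b m n (f * g) = evA a b f * evB a b m n g + evB a b m n f * evA a b g := by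
  simp [evB, evA]
  ring

@[simp] lemma evA_C (a b c : K) : evA a b (C c) = c := by simp [evA]
@[simp] lemma evA_one (a b : K) : evA a b 1 = 1 := by simp [evA]
@[simp] lemma evA_X0 (a b : K) : evA a b (X 0) = 1 := by simp [evA, pt]
@[simp] lemma evA_X1 (a b : K) : evA a b (X 1) = a := by simp [evA, pt]
@[simp] lemma evA_X2 (a b : K) : evA a b (X 2) = b := by simp [evA, pt]
@[simp] lemma evA_X3 (a b : K) : evA a b (X 3) = 0 := by simp [evA, pt]
@[simp] lemma evB_C (a b m n c : K) : evB a b m n (C c) = 0 := by simp [evB]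
@[simp] lemma evA_natCast (a b : K) (k : ℕ) : evA a b (k : Rp K) = k := by simp [evA]
@[simp] lemma evB_natCast (a b m n : K) (k : ℕ) : evB a b m n (k : Rp K) = 0 := by simp [evB]
@[simp] lemma evB_one (a b m n : K) : evB a b m n 1 = 0 := by simp [evB]
@[simp] lemma evB_X0 (a b m n : K) : evB a b m n (X 0) = 0 := by simp [evB, pderiv_X]
@[simp] lemma evB_X1 (a b m n : K) : evB a b m n (X 1) = m := by simp [evB, pderiv_X]
@[simp] lemma evB_X2 (a b m n : K) : evB a b m n (X 2) = n := by simp [evB, pderiv_X]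
@[simp] lemma evB_X3 (a b m n : K) : evB a b m n (X 3) = 1 := by simp [evB, pderiv_X]

@[simp] lemma evA_X0_pow (a b : K) (k : ℕ) : evA a b (X 0 ^ k) = 1 := by
  induction k with
  | zero => simp
  | succ k ih => rw [pow_succ, evA_mul, ih]; simp

@[simp] lemma evB_X0_pow (a b m n : K) (k : ℕ) : evB a b m n (X 0 ^ k) = 0 := by
  induction k with
  | zero => simp
  | succ k ih => rw [pow_succ, evB_mul, ih]; simp

lemma evB_add (a b m n m' n' t : K) (f : Rp K) :
    evB a b (m + t * m') (n + t * n') f =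
      evB a b m n f + t * evT a b m' n' f := by
  simp [evB, evA, evT]
  ring

/-- The value and derivative functionals vanish on multiples of `x₃²`. -/
lemma ev_of_mem_sq (a b m n : K) (f : Rp K) (hf : f ∈ Ideal.span {(X 3 : Rp K) ^ 2}) :
    evA a b f = 0 ∧ evB a b m n f = 0 := by
  obtain ⟨g, rfl⟩ := Ideal.mem_span_singleton'.1 hf
  simp [evA_mul, evB_mul, pow_two]

/-- A form lies in the ideal of the degree-2 scheme cut on the line by `2H` exactly when its value
and its derivative along the line vanish at the intersection point with `H`. -/
lemma mem_scheme_iff (a b m n : K) [CharZero K] {k : ℕ} {f : Rp K}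
    (hf : f ∈ homogeneousSubmodule (Fin 4) K k) :
    f ∈ Ideal.span {form1 a m, form2 b n} ⊔ Ideal.span {(X 3 : Rp K) ^ 2} ↔
      evA a b f = 0 ∧ evB a b m n f = 0 := by
  set I := Ideal.span {form1 a m, form2 b n} ⊔ Ideal.span {(X 3 : Rp K) ^ 2} with hI
  have hto : ∀ g ∈ I, evA a b g = 0 ∧ evB a b m n g = 0 := by
    intro g hg
    obtain ⟨u, hu, v, hv, rfl⟩ := Submodule.mem_sup.1 hg
    obtain ⟨c, d, rfl⟩ := Ideal.mem_span_pair.1 hu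
    have := ev_of_mem_sq a b m n v hv
    simp [this, evA_mul, evB_mul, form1, form2]
  refine ⟨hto f, fun ⟨hA, hB⟩ => ?_⟩
  have hl1 : form1 a m ∈ I := Ideal.mem_sup_left (Ideal.subset_span (by simp))
  have hl2 : form2 b n ∈ I := Ideal.mem_sup_left (Ideal.subset_span (by simp))
  have hq : (X 3 : Rp K) ^ 2 ∈ I := Ideal.mem_sup_right (Ideal.subset_span (by simp))
  -- Modulo `I`, every form of degree `k` is a combination of `x₀ᵏ` and `x₀ᵏ⁻¹x₃`; the factor `k`
  -- kills the second generator in degree zero.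
  let M : ℕ → Submodule K (Rp K) := fun k =>
    Submodule.span K {X 0 ^ k, (k : Rp K) * (X 0 ^ (k - 1) * X 3)} ⊔ I.restrictScalars K
  have hX0 : ∀ k, ∀ f ∈ M k, X 0 * f ∈ M (k + 1) := by
    intro k f hf
    obtain ⟨u, hu, v, hv, rfl⟩ := Submodule.mem_sup.1 hf
    obtain ⟨c, d, rfl⟩ := Submodule.mem_span_pair.1 hu
    refine Submodule.mem_sup.2 ⟨_, Submodule.mem_span_pair.2
      ⟨c, d * (k / (k + 1)), rfl⟩, X 0 * v, I.mul_mem_left _ hv, ?_⟩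
    have hk : ((k : K) + 1) ≠ 0 := by exact_mod_cast Nat.succ_ne_zero k
    have e1 : (C ((k : K) / (k + 1)) : Rp K) * (k + 1) = k := by
      have : ((k : Rp K) + 1) = C ((k : K) + 1) := by simp
      rw [this, ← C_mul, div_mul_cancel₀ _ hk]; simp
    rcases k with _ | k
    · simp [smul_eq_C_mul]; ring
    · simp only [smul_eq_C_mul, C_mul]
      push_cast at e1 ⊢
      linear_combination (C d * X 0 ^ (k + 1) * X 3) * e1
  have hX3 : ∀ k, ∀ f ∈ M k, X 3 * f ∈ M (k + 1) := by
    intro k f hf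
    obtain ⟨u, hu, v, hv, rfl⟩ := Submodule.mem_sup.1 hf
    obtain ⟨c, d, rfl⟩ := Submodule.mem_span_pair.1 hu
    refine Submodule.mem_sup.2 ⟨_, Submodule.mem_span_pair.2
      ⟨0, c * (1 / (k + 1)), rfl⟩, X 3 * v + C d * (k : Rp K) * X 0 ^ (k - 1) * X 3 ^ 2,
        I.add_mem (I.mul_mem_left _ hv) (I.mul_mem_left _ hq), ?_⟩
    have hk : ((k : K) + 1) ≠ 0 := by exact_mod_cast Nat.succ_ne_zero k
    have e1 : (C ((1 : K) / (k + 1)) : Rp K) * (k + 1) = 1 := by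
      have : ((k : Rp K) + 1) = C ((k : K) + 1) := by simp
      rw [this, ← C_mul, div_mul_cancel₀ _ hk]; simp
    simp only [smul_eq_C_mul, C_mul, C_0]
    push_cast
    linear_combination (C c * X 0 ^ k * X 3) * e1
  have hM : f ∈ M k := by
    refine homogeneous_le M ?_ ?_ k hf
    · exact Submodule.mem_sup_left (Submodule.subset_span (by simp))
    · intro i k f hf
      have hIM : ∀ g ∈ I, g * f ∈ M (k + 1) := fun g hg =>
        Submodule.mem_sup_right (I.mul_mem_right _ hg)
      have key : ∀ (c d : K) (g : Rp K), g ∈ I → (g + C c * X 0 + C d * X 3) * f ∈ M (k + 1) := by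
        intro c d g hg
        have : (g + C c * X 0 + C d * X 3) * f =
            g * f + c • (X 0 * f) + d • (X 3 * f) := by
          simp only [smul_eq_C_mul]; ring
        rw [this]
        exact add_mem (add_mem (hIM g hg) (Submodule.smul_mem _ _ (hX0 k f hf)))
          (Submodule.smul_mem _ _ (hX3 k f hf))
      fin_cases i
      · exact hX0 k f hf
      · convert! key a m _ hl1 using 2
        simp [form1]; ring
      · convert! key b n _ hl2 using 2
        simp [form2]; ring
      · exact hX3 k f hf
  obtain ⟨u, hu, v, hv, rfl⟩ := Submodule.mem_sup.1 hM
  obtain ⟨c, d, rfl⟩ := Submodule.mem_span_pair.1 hu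
  have hv' := hto v hv
  have hkC : (k : Rp K) = C (k : K) := by simp
  rw [hkC] at hA hB ⊢
  have hc : c = 0 := by
    simpa [hv', evA_mul] using hA
  have hd : d * k = 0 := by
    simpa [hv', evA_mul, evB_mul, hc] using hB
  have : d • (C (k : K) * (X 0 ^ (k - 1) * X 3) : Rp K) = 0 := by
    rw [smul_eq_C_mul, ← mul_assoc, ← C_mul, hd]; simp
  rw [this, hc]
  simpa using hv

lemma evT_of_mem_sq (a b m n : K) (f : Rp K) (hf : f ∈ Ideal.span {(X 3 : Rp K) ^ 2}) :
    evT a b m n f = 0 := by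
  have h := evB_add a b 0 0 m n 1 f
  rw [(ev_of_mem_sq a b _ _ f hf).2, (ev_of_mem_sq a b _ _ f hf).2] at h
  simpa using h.symm

/-! ### The Newton basis on the integral grid -/

/-- The falling factorial `x (x - 1) ⋯ (x - n + 1)` in `K`. -/
def ff (n : ℕ) (x : K) : K := ∏ u ∈ Finset.range n, (x - u)

lemma ff_succ (n : ℕ) (x : K) : ff (n + 1) x = ff n x * (x - n) := Finset.prod_range_succ _ _

lemma ff_eq_zero {n x : ℕ} (h : x < n) : ff n (x : K) = 0 :=
  Finset.prod_eq_zero (Finset.mem_range.2 h) (sub_self _)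

lemma ff_ne_zero [CharZero K] {n x : ℕ} (h : n ≤ x) : ff n (x : K) ≠ 0 := by
  refine Finset.prod_ne_zero_iff.2 fun u hu => ?_
  rw [sub_ne_zero]
  have := Finset.mem_range.1 hu
  exact_mod_cast (by omega : x ≠ u)

/-- The homogenized falling factorial `xᵢ (xᵢ - x₀) ⋯ (xᵢ - (n - 1) x₀)`. -/
def fall (i : Fin 4) (n : ℕ) : Rp K := ∏ u ∈ Finset.range n, (X i - C (u : K) * X 0)

lemma fall_succ (i : Fin 4) (n : ℕ) :
    (fall i (n + 1) : Rp K) = fall i n * (X i - C (n : K) * X 0) := by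
  rw [fall, Finset.prod_range_succ, fall]

@[simp] lemma evA_fall1 (a b : K) (n : ℕ) : evA a b (fall 1 n) = ff n a := by
  induction n with
  | zero => simp [fall, ff]
  | succ n ih =>
    rw [fall_succ, evA_mul, ih, map_sub, evA_mul, ff_succ]; simp

@[simp] lemma evA_fall2 (a b : K) (n : ℕ) : evA a b (fall 2 n) = ff n b := by
  induction n with
  | zero => simp [fall, ff]
  | succ n ih =>
    rw [fall_succ, evA_mul, ih, map_sub, evA_mul, ff_succ]; simp

lemma evB_fall1 (a b n : K) (d : ℕ) : evB a b 0 n (fall 1 d) = 0 := by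
  induction d with
  | zero => simp [fall]
  | succ d ih => rw [fall_succ, evB_mul, ih, map_sub, evB_mul]; simp

lemma evB_fall2 (a b m : K) (d : ℕ) : evB a b m 0 (fall 2 d) = 0 := by
  induction d with
  | zero => simp [fall]
  | succ d ih => rw [fall_succ, evB_mul, ih, map_sub, evB_mul]; simp

/-- The derivative of the falling factorial of degree `a + 1` at its last root `a`. -/
lemma evB_fall1_succ (a : ℕ) (b n : K) : evB (a : K) b 1 n (fall 1 (a + 1)) = ff a (a : K) := by
  rw [fall_succ, evB_mul, map_sub, map_sub, evB_mul, evA_mul]; simp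

/-- The elements of the Newton basis of `[R]_k` adapted to the integral grid points `(1 : a : b : 0)`,
for `a + b + c ≤ k`. Beyond this range the exponent of `x₀` truncates to `0` and the degree is
`a + b + c` instead of `k`. -/
def nb (k a b c : ℕ) : Rp K := X 3 ^ c * (X 0 ^ (k - (a + b + c)) * (fall 1 a * fall 2 b))

lemma fall_homog (i : Fin 4) (n : ℕ) : (fall i n : Rp K).IsHomogeneous n := by
  induction n with
  | zero => simpa [fall] using isHomogeneous_one (Fin 4) K
  | succ n ih =>
    rw [fall_succ]
    exact ih.mul ((isHomogeneous_X K i).sub (isHomogeneous_C_mul_X _ _))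

lemma nb_mem {k a b c : ℕ} (h : a + b + c ≤ k) :
    (nb k a b c : Rp K) ∈ homogeneousSubmodule (Fin 4) K k := by
  have := (isHomogeneous_X_pow (R := K) (3 : Fin 4) c).mul
    ((isHomogeneous_X_pow (R := K) (0 : Fin 4) (k - (a + b + c))).mul
      ((fall_homog 1 a).mul (fall_homog 2 b)))
  rw [mem_homogeneousSubmodule]
  convert! this using 1
  omega

lemma homogeneous_le_nb (k : ℕ) : homogeneousSubmodule (Fin 4) K k ≤
    Submodule.span K {f | ∃ a b c, a + b + c ≤ k ∧ f = nb k a b c} := by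
  refine homogeneous_le (fun k => Submodule.span K {f | ∃ a b c, a + b + c ≤ k ∧ f = nb k a b c})
    (Submodule.subset_span ⟨0, 0, 0, le_rfl, by simp [nb, fall]⟩) ?_ k
  intro i k f hf
  have hmem : ∀ a b c, a + b + c ≤ k + 1 → (nb (k + 1) a b c : Rp K) ∈
      Submodule.span K {f | ∃ a b c, a + b + c ≤ k + 1 ∧ f = nb (k + 1) a b c} :=
    fun a b c h => Submodule.subset_span ⟨a, b, c, h, rfl⟩
  induction hf using Submodule.span_induction with
  | mem f hf =>
    obtain ⟨a, b, c, h, rfl⟩ := hf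
    have e0 : k + 1 - (a + b + c) = k - (a + b + c) + 1 := by omega
    have h0 : (X 0 * nb k a b c : Rp K) = nb (k + 1) a b c := by
      rw [nb, nb, e0]; ring
    fin_cases i
    · exact h0 ▸ hmem a b c (by omega)
    · have : (X 1 * nb k a b c : Rp K) = nb (k + 1) (a + 1) b c + (a : K) • nb (k + 1) a b c := by
        rw [← h0, nb, nb, fall_succ, show k + 1 - (a + 1 + b + c) = k - (a + b + c) by omega,
          smul_eq_C_mul]
        ring
      exact this ▸ add_mem (hmem _ _ _ (by omega)) (Submodule.smul_mem _ _ (hmem _ _ _ (by omega)))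
    · have : (X 2 * nb k a b c : Rp K) = nb (k + 1) a (b + 1) c + (b : K) • nb (k + 1) a b c := by
        rw [← h0, nb, nb, fall_succ, show k + 1 - (a + (b + 1) + c) = k - (a + b + c) by omega,
          smul_eq_C_mul]
        ring
      exact this ▸ add_mem (hmem _ _ _ (by omega)) (Submodule.smul_mem _ _ (hmem _ _ _ (by omega)))
    · have : (X 3 * nb k a b c : Rp K) = nb (k + 1) a b (c + 1) := by
        rw [nb, nb, show k + 1 - (a + b + (c + 1)) = k - (a + b + c) by omega]
        ring
      exact this ▸ hmem _ _ _ (by omega)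
  | zero => simp
  | add x y _ _ hx hy => rw [mul_add]; exact add_mem hx hy
  | smul c x _ hx => rw [mul_smul_comm]; exact Submodule.smul_mem _ _ hx

lemma evA_nb_zero (x y : K) (k a b : ℕ) : evA x y (nb k a b 0) = ff a x * ff b y := by
  simp [nb, evA_mul]

lemma evA_nb_one (x y : K) (k a b : ℕ) : evA x y (nb k a b 1) = 0 := by
  simp [nb, evA_mul]

lemma evB_nb_one (x y m n : K) (k a b : ℕ) : evB x y m n (nb k a b 1) = ff a x * ff b y := by
  simp [nb, evA_mul, evB_mul]

lemma evB_nb_zero (x y m : K) (k a b : ℕ) :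
    evB x y m 0 (nb k a b 0) = evB x y m 0 (fall 1 a) * ff b y := by
  simp [nb, evA_mul, evB_mul, evB_fall2]

/-- A triangular system of functionals killing `x₃²`, matched with the Newton basis in degree `k`,
detects membership in `(x₃²)` of forms of degree `k`. -/
lemma mem_sq_of_tri {ι : Type*} [Fintype ι] {k : ℕ} (φ : ι → Rp K →ₗ[K] K) (e : ι → Rp K)
    (ρ : ι → ℕ) (h1 : ∀ i, φ i (e i) ≠ 0) (h0 : ∀ i j, i ≠ j → ρ i ≤ ρ j → φ i (e j) = 0)
    (hsq : ∀ i, ∀ f ∈ Ideal.span {(X 3 : Rp K) ^ 2}, φ i f = 0)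
    (hcov : ∀ a b c, c ≤ 1 → a + b + c ≤ k → ∃ i, e i = nb k a b c) {f : Rp K}
    (hf : f ∈ homogeneousSubmodule (Fin 4) K k) (hφ : ∀ i, φ i f = 0) :
    f ∈ Ideal.span {(X 3 : Rp K) ^ 2} := by
  have hle : Submodule.span K {f | ∃ a b c, a + b + c ≤ k ∧ f = nb k a b c} ≤
      Submodule.span K (Set.range e) ⊔
        (Ideal.span {(X 3 : Rp K) ^ 2}).restrictScalars K := by
    refine Submodule.span_le.2 ?_
    rintro _ ⟨a, b, c, h, rfl⟩
    by_cases hc : c ≤ 1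
    · obtain ⟨i, hi⟩ := hcov a b c hc h
      exact Submodule.mem_sup_left (Submodule.subset_span ⟨i, hi⟩)
    · refine Submodule.mem_sup_right (Ideal.mem_span_singleton.2 ?_)
      exact (pow_dvd_pow _ (by omega)).mul_right _
  obtain ⟨u, hu, v, hv, rfl⟩ := Submodule.mem_sup.1 (hle (homogeneous_le_nb k hf))
  have : u = 0 := tri_eq_zero φ e ρ h1 h0 u hu fun i => by
    have := hφ i
    rwa [map_add, hsq i v hv, add_zero] at this
  simpa [this] using hv

/-! ### The sets of grid points and their conditions -/

/-- The sets of grid points used below: a full triangle `a + b < k` together with part of the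
diagonal `a + b = k`. The last condition, on the diagonal, says that the shift
`(a, b) ↦ (a + 1, b - 1)` maps the chosen points into the omitted ones, or that its inverse maps the
omitted points into the chosen ones. -/
structure GoodSet (k : ℕ) (P : Finset (ℕ × ℕ)) : Prop where
  tri : ∀ a b, a + b < k → (a, b) ∈ P
  le : ∀ p ∈ P, p.1 + p.2 ≤ k
  diag : (∀ p ∈ P, p.1 + p.2 = k → 1 ≤ p.2 ∧ (p.1 + 1, p.2 - 1) ∉ P) ∨
    (∀ p ∉ P, p.1 + p.2 = k → 1 ≤ p.1 ∧ (p.1 - 1, p.2 + 1) ∈ P)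

lemma exists_goodSet (r : ℕ) : ∃ k P, GoodSet k P ∧ P.card = r := by
  obtain ⟨k, s, hs, rfl⟩ : ∃ k s, s ≤ k ∧ ∑ i ∈ Finset.range k, (i + 1) + s = r := by
    induction r with
    | zero => exact ⟨0, 0, le_rfl, rfl⟩
    | succ r ih =>
      obtain ⟨k, s, hs, rfl⟩ := ih
      rcases hs.lt_or_eq with h | rfl
      · exact ⟨k, s + 1, h, by omega⟩
      · exact ⟨s + 1, 0, by omega, by rw [Finset.sum_range_succ]; omega⟩
  have key : ∀ S : Finset ℕ, S.card = s → (∀ a ∈ S, a ≤ k) →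
      ((∀ a ∈ S, a + 1 ≤ k ∧ a + 1 ∉ S) ∨ (∀ a ≤ k, a ∉ S → 1 ≤ a ∧ a - 1 ∈ S)) →
      ∃ k' P, GoodSet k' P ∧ P.card = ∑ i ∈ Finset.range k, (i + 1) + s := by
    intro S hS hSk hd
    let T := (Finset.range k).biUnion fun i => Finset.HasAntidiagonal.antidiagonal i
    let D := S.image fun a => (a, k - a)
    have hT : ∀ p, p ∈ T ↔ p.1 + p.2 < k := by
      intro p; simp [T]
    have hD : ∀ p, p ∈ D ↔ p.1 + p.2 = k ∧ p.1 ∈ S := by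
      rintro ⟨a, b⟩
      simp only [D, Finset.mem_image, Prod.mk.injEq]
      constructor
      · rintro ⟨a, ha, rfl, rfl⟩
        have := hSk a ha
        exact ⟨by omega, ha⟩
      · rintro ⟨h, ha⟩
        exact ⟨a, ha, rfl, by omega⟩
    refine ⟨k, T ∪ D, ⟨?_, ?_, ?_⟩, ?_⟩
    · intro a b h
      exact Finset.mem_union_left _ ((hT _).2 h)
    · intro p hp
      rcases Finset.mem_union.1 hp with h | h
      · exact ((hT _).1 h).le
      · exact ((hD _).1 h).1.le
    · simp only [Finset.mem_union, hT, hD]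
      refine hd.imp (fun h p hp hk => ?_) (fun h p hp hk => ?_)
      · have := h p.1 (by rcases hp with hp | hp; omega; exact hp.2)
        refine ⟨by omega, ?_⟩
        rintro (h' | h')
        · omega
        · exact this.2 h'.2
      · have := h p.1 (by omega) (fun h' => hp (Or.inr ⟨hk, h'⟩))
        exact ⟨this.1, Or.inr ⟨by omega, this.2⟩⟩
    · rw [Finset.card_union_of_disjoint, Finset.card_biUnion, Finset.card_image_of_injective, hS]
      · simp
      · intro a b h; simpa using congrArg Prod.fst h
      · intro i _ j _ hij
        rw [Function.onFun, Finset.disjoint_left]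
        intro p hp hp'
        rw [Finset.HasAntidiagonal.mem_antidiagonal] at hp hp'
        exact hij (hp.symm.trans hp')
      · rw [Finset.disjoint_left]
        intro p hp hp'
        have := (hT _).1 hp
        have := (hD _).1 hp'
        omega
  by_cases h : 2 * s ≤ k + 1
  · refine key ((Finset.range s).image fun j => 2 * j) ?_ ?_ (Or.inl ?_)
    · rw [Finset.card_image_of_injective _ (fun a b h => by simpa using h), Finset.card_range]
    · simp only [Finset.mem_image, Finset.mem_range]
      rintro _ ⟨j, hj, rfl⟩; omega
    · simp only [Finset.mem_image, Finset.mem_range]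
      rintro _ ⟨j, hj, rfl⟩
      refine ⟨by omega, ?_⟩
      rintro ⟨j', _, h'⟩; omega
  · refine key (Finset.range (k + 1) \ (Finset.range (k + 1 - s)).image fun j => 2 * j + 1)
      ?_ ?_ (Or.inr ?_)
    · rw [Finset.card_sdiff_of_subset, Finset.card_image_of_injective _
        (fun a b h => by simpa using h), Finset.card_range, Finset.card_range]
      · omega
      · intro a
        simp only [Finset.mem_image, Finset.mem_range]
        rintro ⟨j, hj, rfl⟩; omega
    · intro a
      simp only [Finset.mem_sdiff, Finset.mem_range]; omega
    · intro a ha h'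
      simp only [Finset.mem_sdiff, Finset.mem_range, Finset.mem_image, not_and, not_not] at h' ⊢
      obtain ⟨j, hj, rfl⟩ := h' (by omega)
      refine ⟨by omega, by omega, ?_⟩
      rintro ⟨j', _, h'⟩; omega

/-- The functionals defining the scheme: for each grid point `p = (a, b)`, the value at
`(1, a, b, 0)` and the derivative along the line through this point and `(0, m, n, 1)`, where
`(m, n) = (δ, 0) + t (-b, a)` and `δ` is `1` on the diagonal `a + b = k` and `0` elsewhere. -/
def fn (k : ℕ) (t : K) (p : ℕ × ℕ) : Bool → (Rp K →ₗ[K] K)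
  | false => evA (p.1 : K) p.2
  | true => evB (p.1 : K) p.2 ((if p.1 + p.2 = k then 1 else 0) + t * -(p.2 : K)) (0 + t * p.1)

lemma fn_sq (k : ℕ) (t : K) (p : ℕ × ℕ) (c : Bool) (f : Rp K)
    (hf : f ∈ Ideal.span {(X 3 : Rp K) ^ 2}) : fn k t p c f = 0 := by
  cases c
  · exact (ev_of_mem_sq _ _ 0 0 f hf).1
  · exact (ev_of_mem_sq _ _ _ _ f hf).2

lemma ff_mul_eq_zero {p q : ℕ × ℕ} (h : ¬ q ≤ p) :
    ff q.1 (p.1 : K) * ff q.2 (p.2 : K) = 0 := by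
  rw [Prod.le_def, not_and_or, not_le, not_le] at h
  rcases h with h | h <;> simp [ff_eq_zero h]

lemma not_le_of_size {p q : ℕ × ℕ} (hne : p ≠ q) (h : p.1 + p.2 ≤ q.1 + q.2) : ¬ q ≤ p := by
  rintro ⟨h1, h2⟩
  exact hne (Prod.ext (by omega) (by omega))

/-! ### Maximal rank in each degree -/

section Triangular

variable (k : ℕ) (P : Finset (ℕ × ℕ))

lemma fn_nb_ne_zero [CharZero K] (t : K) (d : ℕ) (p : ℕ × ℕ) (c : Bool) :
    fn k t p c (nb d p.1 p.2 c.toNat) ≠ 0 := by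
  have := mul_ne_zero (ff_ne_zero (K := K) (le_refl p.1)) (ff_ne_zero (K := K) (le_refl p.2))
  cases c
  · simpa only [fn, Bool.toNat_false, evA_nb_zero] using this
  · simpa only [fn, Bool.toNat_true, evB_nb_one] using this

lemma fn_nb_eq_zero (t : K) (d : ℕ) (p q : ℕ × ℕ) (c c' : Bool) (hne : (p, c) ≠ (q, c'))
    (hq : q.1 + q.2 ≤ k)
    (h : c.toNat * (k + 1) + (p.1 + p.2) ≤ c'.toNat * (k + 1) + (q.1 + q.2)) :
    fn k t p c (nb d q.1 q.2 c'.toNat) = 0 := by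
  cases c <;> cases c'
  · simp only [fn, Bool.toNat_false, evA_nb_zero]
    refine ff_mul_eq_zero (not_le_of_size (fun h => hne (by rw [h])) ?_)
    simpa using h
  · simp only [fn, Bool.toNat_true, evA_nb_one]
  · simp only [Bool.toNat_true, Bool.toNat_false] at h
    omega
  · simp only [fn, Bool.toNat_true, evB_nb_one]
    refine ff_mul_eq_zero (not_le_of_size (fun h => hne (by rw [h])) ?_)
    simpa using h

/-- In degrees `d` above the critical degree `k` the conditions are independent for every value of `t`. -/
lemma surj_high [CharZero K] (hP : GoodSet k P) (t : K) {d : ℕ} (hd : k < d) (y : P × Bool → K) :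
    ∃ v ∈ homogeneousSubmodule (Fin 4) K d, ∀ i : P × Bool, fn k t i.1 i.2 v = y i := by
  obtain ⟨x, hx⟩ := tri_surjective (fun i : P × Bool => fn k t i.1 i.2)
    (fun i => nb d i.1.1.1 i.1.1.2 i.2.toNat)
    (fun i => i.2.toNat * (k + 1) + (i.1.1.1 + i.1.1.2))
    (fun i => fn_nb_ne_zero k t d i.1 i.2)
    (fun i j hij h => fn_nb_eq_zero k t d i.1 j.1 i.2 j.2
      (fun h' => hij (by
        rw [Prod.mk.injEq] at h'
        exact Prod.ext (Subtype.ext h'.1) h'.2)) (hP.le _ j.1.2) h) y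
  refine ⟨_, Submodule.sum_mem _ fun j _ => Submodule.smul_mem _ _ (nb_mem ?_), hx⟩
  have := hP.le _ j.1.2
  have := Bool.toNat_le j.2
  omega

/-- In degrees `d` below the critical degree `k` only multiples of `x₃²` satisfy the conditions, for every `t`. -/
lemma inj_low [CharZero K] (hP : GoodSet k P) (t : K) {d : ℕ} (hd : d < k) {f : Rp K}
    (hf : f ∈ homogeneousSubmodule (Fin 4) K d)
    (h : ∀ i : P × Bool, fn k t i.1 i.2 f = 0) : f ∈ Ideal.span {(X 3 : Rp K) ^ 2} := by
  classical
  refine mem_sq_of_tri (ι := {i : P × Bool // i.1.1.1 + i.1.1.2 + i.2.toNat ≤ d})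
    (fun i => fn k t i.1.1 i.1.2)
    (fun i => nb d i.1.1.1.1 i.1.1.1.2 i.1.2.toNat)
    (fun i => i.1.2.toNat * (k + 1) + (i.1.1.1.1 + i.1.1.1.2))
    (fun i => fn_nb_ne_zero k t d i.1.1 i.1.2)
    (fun i j hij h => fn_nb_eq_zero k t d i.1.1 j.1.1 i.1.2 j.1.2
      (fun h' => hij (by
        rw [Prod.mk.injEq] at h'
        exact Subtype.ext (Prod.ext (Subtype.ext h'.1) h'.2)))
      (hP.le _ j.1.1.2) h)
    (fun i f hf => fn_sq k t _ _ f hf) ?_ hf (fun i => h i.1)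
  intro a b c hc habc
  refine ⟨⟨(⟨(a, b), hP.tri a b (by omega)⟩, decide (c = 1)), ?_⟩, ?_⟩
  · rcases (by omega : c = 0 ∨ c = 1) with rfl | rfl <;> simpa using habc
  · rcases (by omega : c = 0 ∨ c = 1) with rfl | rfl <;> simp

/-- The Newton form of degree `k` matched with the condition `(p, c)` in the critical degree: the
derivative condition at a diagonal point `(a, b)` is matched with the form of index
`(a + 1, b - 1)`. -/
def critNb (p : ℕ × ℕ) (c : Bool) : Rp K :=
  if c = true ∧ p.1 + p.2 = k then nb k (p.1 + 1) (p.2 - 1) 0 else nb k p.1 p.2 c.toNat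

/-- The ranking making the critical system triangular: values first, then derivatives at interior
points, then derivatives at diagonal points. -/
def critRank (p : ℕ × ℕ) (c : Bool) : ℕ :=
  if c = true ∧ p.1 + p.2 = k then 2 * (k + 1) + p.2 else c.toNat * (k + 1) + (p.1 + p.2)

/-- A condition `(p, c)` can be matched unless it is the derivative at a diagonal point whose
shift `(a + 1, b - 1)` leaves the grid or is itself a chosen point. -/
def Matched (p : ℕ × ℕ) (c : Bool) : Prop :=
  c = true → p.1 + p.2 = k → 1 ≤ p.2 ∧ (p.1 + 1, p.2 - 1) ∉ P

lemma crit_ne_zero [CharZero K] (p : ℕ × ℕ) (c : Bool) (hm : Matched k P p c) :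
    fn k (0 : K) p c (critNb k p c) ≠ 0 := by
  by_cases h : c = true ∧ p.1 + p.2 = k
  · obtain ⟨rfl, hp⟩ := h
    rw [critNb, if_pos ⟨rfl, hp⟩]
    simp only [fn, hp, if_true, zero_mul, add_zero, evB_nb_zero, evB_fall1_succ]
    exact mul_ne_zero (ff_ne_zero le_rfl) (ff_ne_zero (by omega))
  · rw [critNb, if_neg h]
    exact fn_nb_ne_zero k 0 k p c

lemma crit_eq_zero (hP : GoodSet k P) (p q : ℕ × ℕ) (c c' : Bool) (hp : p ∈ P) (hq : q ∈ P)
    (hne : (p, c) ≠ (q, c')) (hm' : Matched k P q c')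
    (h : critRank k p c ≤ critRank k q c') :
    fn k (0 : K) p c (critNb k q c') = 0 := by
  have hpk := hP.le p hp
  have hqk := hP.le q hq
  by_cases hj : c' = true ∧ q.1 + q.2 = k
  · obtain ⟨rfl, hqd⟩ := hj
    obtain ⟨h1, h2⟩ := hm' rfl hqd
    have hne' : p ≠ (q.1 + 1, q.2 - 1) := fun h => h2 (h ▸ hp)
    rw [critNb, if_pos ⟨rfl, hqd⟩]
    cases c
    · simp only [fn, evA_nb_zero]
      exact ff_mul_eq_zero (q := (q.1 + 1, q.2 - 1))
        (not_le_of_size hne' (by dsimp only; omega))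
    · simp only [fn, zero_mul, add_zero, evB_nb_zero]
      by_cases hpd : p.1 + p.2 = k
      · -- Here `p` and the shift of `q` are distinct points of the diagonal, and the ranking
        -- bounds the second coordinate of `p`.
        rw [critRank, critRank, if_pos ⟨rfl, hpd⟩, if_pos ⟨rfl, hqd⟩] at h
        have hlt : p.2 < q.2 - 1 := by
          by_contra hcon
          have hpq : p ≠ q := fun h => hne (by rw [h])
          by_cases h3 : p.2 = q.2
          · exact hpq (Prod.ext (by omega) h3)
          · exact hne' (Prod.ext (by dsimp only; omega) (by dsimp only; omega))
        rw [ff_eq_zero hlt, mul_zero]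
      · rw [if_neg hpd, evB_fall1, zero_mul]
  · rw [critNb, if_neg hj]
    have hi : ¬ (c = true ∧ p.1 + p.2 = k) := by
      intro hi
      rw [critRank, critRank, if_pos hi, if_neg hj] at h
      have := Bool.toNat_le c'
      have : c'.toNat * (k + 1) ≤ 1 * (k + 1) := Nat.mul_le_mul_right _ this
      omega
    rw [critRank, critRank, if_neg hi, if_neg hj] at h
    exact fn_nb_eq_zero k 0 k p q c c' hne hqk h

/-- Maximal rank in the critical degree at the special member `t = 0` of the pencil. -/
lemma crit_dichotomy [CharZero K] (hP : GoodSet k P) :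
    (∀ y : P × Bool → K, ∃ v ∈ homogeneousSubmodule (Fin 4) K k,
      ∀ i : P × Bool, fn k (0 : K) i.1 i.2 v = y i) ∨
    (∀ f ∈ homogeneousSubmodule (Fin 4) K k, (∀ i : P × Bool, fn k (0 : K) i.1 i.2 f = 0) →
      f ∈ Ideal.span {(X 3 : Rp K) ^ 2}) := by
  classical
  rcases hP.diag with hd | hd
  · left
    intro y
    have hM : ∀ i : P × Bool, Matched k P i.1 i.2 := fun i _ h => hd _ i.1.2 h
    obtain ⟨x, hx⟩ := tri_surjective (fun i : P × Bool => fn k (0 : K) i.1 i.2)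
      (fun i => critNb k i.1 i.2) (fun i => critRank k i.1 i.2)
      (fun i => crit_ne_zero k P i.1 i.2 (hM i))
      (fun i j hij h => crit_eq_zero k P hP i.1 j.1 i.2 j.2 i.1.2 j.1.2
        (fun h' => hij (by
          rw [Prod.mk.injEq] at h'
          exact Prod.ext (Subtype.ext h'.1) h'.2)) (hM j) h) y
    refine ⟨_, Submodule.sum_mem _ fun j _ => Submodule.smul_mem _ _ ?_, hx⟩
    have := hP.le _ j.1.2
    by_cases h : j.2 = true ∧ j.1.1.1 + j.1.1.2 = k
    · have := (hM j h.1 h.2).1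
      rw [critNb, if_pos h]
      exact nb_mem (by omega)
    · rw [critNb, if_neg h]
      refine nb_mem ?_
      rcases j with ⟨p, c⟩
      cases c
      · simpa using this
      · simp only [true_and, Bool.toNat_true] at h this ⊢
        omega
  · right
    intro f hf h
    refine mem_sq_of_tri (ι := {i : P × Bool // Matched k P i.1 i.2})
      (fun i => fn k (0 : K) i.1.1 i.1.2)
      (fun i => critNb k i.1.1 i.1.2) (fun i => critRank k i.1.1 i.1.2)
      (fun i => crit_ne_zero k P i.1.1 i.1.2 i.2)
      (fun i j hij h => crit_eq_zero k P hP i.1.1 j.1.1 i.1.2 j.1.2 i.1.1.2 j.1.1.2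
        (fun h' => hij (by
          rw [Prod.mk.injEq] at h'
          exact Subtype.ext (Prod.ext (Subtype.ext h'.1) h'.2))) j.2 h)
      (fun i f hf => fn_sq k 0 _ _ f hf) ?_ hf (fun i => h i.1)
    intro a b c hc habc
    rcases (by omega : c = 0 ∨ c = 1) with rfl | rfl
    · by_cases hab : (a, b) ∈ P
      · exact ⟨⟨(⟨(a, b), hab⟩, false), fun h => by simp at h⟩, by simp [critNb]⟩
      · have hk : a + b = k := by
          by_contra hne
          exact hab (hP.tri a b (by omega))
        obtain ⟨h1, h2⟩ := hd (a, b) hab hk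
        dsimp only at h1 h2
        have e1 : a - 1 + 1 = a := by omega
        refine ⟨⟨(⟨(a - 1, b + 1), h2⟩, true), fun _ _ => ⟨by simp, by simpa [e1] using hab⟩⟩, ?_⟩
        dsimp only
        rw [critNb, if_pos ⟨rfl, by dsimp only; omega⟩]
        simp [e1]
    · have hlt : a + b < k := by omega
      refine ⟨⟨(⟨(a, b), hP.tri a b hlt⟩, true), fun _ h => absurd h (by dsimp only; omega)⟩, ?_⟩
      dsimp only
      rw [critNb, if_neg (by dsimp only; omega)]
      simp

/-- Maximal rank in the critical degree persists for all but finitely many `t`. -/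
lemma crit_finite_bad [CharZero K] (hP : GoodSet k P) :
    {t : K | ¬ ((∀ y : P × Bool → K, ∃ v ∈ homogeneousSubmodule (Fin 4) K k,
        ∀ i : P × Bool, fn k t i.1 i.2 v = y i) ∨
      (∀ f ∈ homogeneousSubmodule (Fin 4) K k, (∀ i : P × Bool, fn k t i.1 i.2 f = 0) →
        f ∈ Ideal.span {(X 3 : Rp K) ^ 2}))}.Finite := by
  let V := homogeneousSubmodule (Fin 4) K k
  let Φ : V →ₗ[K] (P × Bool → K) :=
    (LinearMap.pi fun i : P × Bool => fn k (0 : K) i.1 i.2) ∘ₗ V.subtype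
  let Ψ : V →ₗ[K] (P × Bool → K) :=
    (LinearMap.pi fun i : P × Bool =>
      if i.2 = true then evT (i.1.1.1 : K) i.1.1.2 (-(i.1.1.2 : K)) i.1.1.1 else 0) ∘ₗ V.subtype
  have hΦΨ : ∀ (t : K) (v : V) (i : P × Bool), (Φ + t • Ψ) v i = fn k t i.1 i.2 v := by
    rintro t v ⟨p, c⟩
    cases c
    · simp [Φ, Ψ, fn]
    · simp only [fn]
      rw [evB_add]
      simp [Φ, Ψ, fn]
  have hΦ : ∀ (v : V) (i : P × Bool), Φ v i = fn k 0 i.1 i.2 v := fun v i => rfl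
  refine (finite_bad_pencil Φ Ψ).subset fun t ht hcon => ht ?_
  rcases crit_dichotomy (K := K) k P hP with h | h
  · left
    have hs : Function.Surjective Φ := fun y => by
      obtain ⟨v, hv, hvy⟩ := h y
      exact ⟨⟨v, hv⟩, funext hvy⟩
    intro y
    obtain ⟨v, hv⟩ := hcon.1 hs y
    exact ⟨v, v.2, fun i => by rw [← hΦΨ, hv]⟩
  · right
    have hk : ∀ v ∈ LinearMap.ker Φ, (v : Rp K) ∈ Ideal.span {(X 3 : Rp K) ^ 2} := by
      intro v hv
      exact h v v.2 fun i => by rw [← hΦ, LinearMap.mem_ker.1 hv]; rfl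
    intro f hf hfn
    refine hk ⟨f, hf⟩ (hcon.2 ?_ ?_)
    · intro v hv
      rw [LinearMap.mem_ker]
      ext ⟨p, c⟩
      cases c
      · simp [Ψ]
      · simpa [Ψ] using evT_of_mem_sq _ _ _ _ _ (hk v hv)
    · rw [LinearMap.mem_ker]
      ext i
      rw [hΦΨ]
      exact hfn i

end Triangular

/-! ### Skewness and the dimension count -/

/-- Two of the lines are skew once the determinant formed by the differences of their parameters
does not vanish. -/
lemma span_forms (a b m n a' b' m' n' : K)
    (hD : (a' - a) * (n' - n) - (b' - b) * (m' - m) ≠ 0) :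
    Submodule.span K {form1 a m, form2 b n, form1 a' m', form2 b' n'} =
      homogeneousSubmodule (Fin 4) K 1 := by
  have hh1 : ∀ a m : K, form1 a m ∈ homogeneousSubmodule (Fin 4) K 1 := fun a m =>
    ((isHomogeneous_X K _).sub (isHomogeneous_C_mul_X _ _)).sub (isHomogeneous_C_mul_X _ _)
  have hh2 : ∀ a m : K, form2 a m ∈ homogeneousSubmodule (Fin 4) K 1 := fun a m =>
    ((isHomogeneous_X K _).sub (isHomogeneous_C_mul_X _ _)).sub (isHomogeneous_C_mul_X _ _)
  apply le_antisymm
  · rw [Submodule.span_le]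
    intro f hf
    simp only [Set.mem_insert_iff, Set.mem_singleton_iff] at hf
    rcases hf with rfl | rfl | rfl | rfl
    · exact hh1 _ _
    · exact hh2 _ _
    · exact hh1 _ _
    · exact hh2 _ _
  · rw [homogeneousSubmodule_one_eq_span_X, Submodule.span_le]
    set S := Submodule.span K {form1 a m, form2 b n, form1 a' m', form2 b' n'} with hS
    have s1 : form1 a m ∈ S := Submodule.subset_span (by simp)
    have s2 : form2 b n ∈ S := Submodule.subset_span (by simp)
    have s3 : form1 a' m' ∈ S := Submodule.subset_span (by simp)
    have s4 : form2 b' n' ∈ S := Submodule.subset_span (by simp)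
    have hC : ∀ (x : K) (f : Rp K), f ∈ S → C x * f ∈ S := fun x f hf => by
      rw [← smul_eq_C_mul]; exact S.smul_mem _ hf
    obtain ⟨D, hDD⟩ : ∃ D : K, D * ((a' - a) * (n' - n) - (b' - b) * (m' - m)) = 1 :=
      ⟨_, inv_mul_cancel₀ hD⟩
    have hDC : (C D : Rp K) * ((C a' - C a) * (C n' - C n) - (C b' - C b) * (C m' - C m)) = 1 := by
      simp only [← C_sub, ← C_mul, hDD, C_1]
    -- Cramer's rule for `x₀` and `x₃`.
    have x0 : (X 0 : Rp K) ∈ S := by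
      have := hC D _ (sub_mem (hC (n' - n) _ (sub_mem s1 s3)) (hC (m' - m) _ (sub_mem s2 s4)))
      convert! this using 1
      simp only [form1, form2, C_sub]
      linear_combination (-X 0) * hDC
    have x3 : (X 3 : Rp K) ∈ S := by
      have := hC D _ (sub_mem (hC (a' - a) _ (sub_mem s2 s4)) (hC (b' - b) _ (sub_mem s1 s3)))
      convert! this using 1
      simp only [form1, form2, C_sub]
      linear_combination (-X 3) * hDC
    have x1 : (X 1 : Rp K) ∈ S := by
      convert! add_mem (add_mem s1 (hC a _ x0)) (hC m _ x3) using 1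
      simp only [form1]; ring
    have x2 : (X 2 : Rp K) ∈ S := by
      convert! add_mem (add_mem s2 (hC b _ x0)) (hC n _ x3) using 1
      simp only [form2]; ring
    rintro _ ⟨i, rfl⟩
    fin_cases i
    · exact x0
    · exact x1
    · exact x2
    · exact x3

/-- Rank-nullity for the conditions imposed in degree `k`. -/
lemma finrank_of_surj {ι : Type*} [Fintype ι] (k : ℕ) (φ : ι → Rp K →ₗ[K] K)
    (N : Submodule K (Rp K))
    (hN : ∀ f ∈ homogeneousSubmodule (Fin 4) K k, f ∈ N ↔ ∀ i, φ i f = 0)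
    (hs : ∀ y : ι → K, ∃ v ∈ homogeneousSubmodule (Fin 4) K k, ∀ i, φ i v = y i) :
    finrank K ↥(homogeneousSubmodule (Fin 4) K k) -
      finrank K ↥(homogeneousSubmodule (Fin 4) K k ⊓ N) = Fintype.card ι := by
  set V := homogeneousSubmodule (Fin 4) K k with hV
  have : FiniteDimensional K V := Module.Finite.iff_fg.2 (homogeneousSubmodule_fg (Fin 4) K k)
  let Φ : V →ₗ[K] (ι → K) := (LinearMap.pi φ) ∘ₗ V.subtype
  have hker : V ⊓ N = (LinearMap.ker Φ).map V.subtype := by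
    ext f
    simp only [Submodule.mem_inf, Submodule.mem_map, LinearMap.mem_ker, Submodule.subtype_apply]
    constructor
    · rintro ⟨h1, h2⟩
      exact ⟨⟨f, h1⟩, funext ((hN f h1).1 h2), rfl⟩
    · rintro ⟨v, hv, rfl⟩
      exact ⟨v.2, (hN v v.2).2 fun i => congrFun hv i⟩
  have hr : LinearMap.range Φ = ⊤ := LinearMap.range_eq_top.2 fun y => by
    obtain ⟨v, hv, h⟩ := hs y
    exact ⟨⟨v, hv⟩, funext h⟩
  have h := Φ.finrank_range_add_finrank_ker
  rw [hr, finrank_top, Module.finrank_fintype_fun_eq_card] at h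
  rw [hker, LinearEquiv.finrank_eq (Submodule.equivSubtypeMap V (LinearMap.ker Φ)).symm]
  omega

end Polynomials

/-! ### Choice of the lines -/

/-- For every `r ≥ 1` there exist `r` pairwise disjoint (skew) lines in `ℙ³` with
ideals `Pᵢ` and a linear form `L ∉ Pᵢ` such that, with `J = ⋂ᵢ (Pᵢ + (L²))` the
saturated ideal of `Z₂ = C ∩ H²`, for every `k ≥ 0` either `[J]_k` is exactly the
degree-`k` part of the principal ideal `(L²)` (i.e. `[J]_k = L²·[R]_{k-2}`), or
`Z₂` imposes independent conditions in degree `k` (`dim_K [R/J]_k = 2r`). -/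
theorem stmt_7 {K : Type} [Field K] [IsAlgClosed K] [CharZero K]
    (r : ℕ) (hr : 1 ≤ r) :
    ∃ (l l' : Fin r → Rp K) (L : Rp K),
      (∀ i, l i ∈ homogeneousSubmodule (Fin 4) K 1) ∧
      (∀ i, l' i ∈ homogeneousSubmodule (Fin 4) K 1) ∧
      (∀ i, LinearIndependent K ![l i, l' i]) ∧
      -- pairwise skew: the four linear forms of two distinct lines span `[R]₁`
      (∀ i j, i ≠ j →
        Submodule.span K {l i, l' i, l j, l' j} = homogeneousSubmodule (Fin 4) K 1) ∧
      L ∈ homogeneousSubmodule (Fin 4) K 1 ∧ L ≠ 0 ∧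
      (∀ i, L ∉ Ideal.span {l i, l' i}) ∧
      (∀ k : ℕ,
        (homogeneousSubmodule (Fin 4) K k ⊓
            Submodule.restrictScalars K
              ((⨅ i, (Ideal.span {l i, l' i} ⊔ Ideal.span {L ^ 2}) : Ideal (Rp K))) =
          homogeneousSubmodule (Fin 4) K k ⊓
            Submodule.restrictScalars K (Ideal.span {L ^ 2} : Ideal (Rp K))) ∨
        (finrank K ↥(homogeneousSubmodule (Fin 4) K k) -
          finrank K ↥(homogeneousSubmodule (Fin 4) K k ⊓
            Submodule.restrictScalars K
              ((⨅ i, (Ideal.span {l i, l' i} ⊔ Ideal.span {L ^ 2}) : Ideal (Rp K)))) =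
          2 * r)) := by
  obtain ⟨k₀, P, hP, hcard⟩ := exists_goodSet r
  let δ : ℕ × ℕ → K := fun p => if p.1 + p.2 = k₀ then 1 else 0
  let mm : K → ℕ × ℕ → K := fun t p => δ p + t * -(p.2 : K)
  let nn : K → ℕ × ℕ → K := fun t p => 0 + t * (p.1 : K)
  -- The skewness determinant of two lines is affine in `t`, with leading coefficient the squared
  -- distance of the two grid points.
  let bad : P × P → Set K := fun x => {t | x.1 ≠ x.2 ∧
    ((x.2.1.1 : K) - x.1.1.1) * (nn t x.2 - nn t x.1) -
      ((x.2.1.2 : K) - x.1.1.2) * (mm t x.2 - mm t x.1) = 0}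
  have hbad : ∀ x, (bad x).Finite := by
    rintro ⟨⟨p, hp⟩, ⟨q, hq⟩⟩
    refine Set.Subsingleton.finite ?_
    rintro t ⟨hne, ht⟩ t' ⟨-, ht'⟩
    have hq0 : ((q.1 : K) - p.1) ^ 2 + ((q.2 : K) - p.2) ^ 2 ≠ 0 := by
      have : ((q.1 : ℤ) - p.1) ^ 2 + ((q.2 : ℤ) - p.2) ^ 2 ≠ 0 := by
        intro h0
        have h1 : (q.1 : ℤ) - p.1 = 0 := by nlinarith [sq_nonneg ((q.2 : ℤ) - p.2)]
        have h2 : (q.2 : ℤ) - p.2 = 0 := by nlinarith [sq_nonneg ((q.1 : ℤ) - p.1)]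
        exact hne (Subtype.ext (Prod.ext (by dsimp only; omega) (by dsimp only; omega)))
      exact_mod_cast (Int.cast_ne_zero (α := K)).2 this
    apply mul_right_cancel₀ hq0
    simp only [mm, nn] at ht ht'
    linear_combination ht - ht'
  have hfin := (crit_finite_bad (K := K) k₀ P hP).union (Set.finite_iUnion hbad)
  obtain ⟨t, ht⟩ := hfin.exists_notMem
  rw [Set.mem_union, not_or, Set.mem_ofPred_eq, not_not, Set.mem_iUnion, not_exists] at ht
  obtain ⟨hcrit, hskew⟩ := ht
  let σ : Fin r ≃ P := (P.equivFinOfCardEq hcard).symm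
  have hX : ∀ i : Fin 4, (X i : Rp K) ∈ homogeneousSubmodule (Fin 4) K 1 :=
    fun i => isHomogeneous_X K i
  have hscheme : ∀ (k : ℕ), ∀ f ∈ homogeneousSubmodule (Fin 4) K k,
      f ∈ (⨅ i, (Ideal.span {form1 ((σ i).1.1 : K) (mm t (σ i)),
        form2 ((σ i).1.2 : K) (nn t (σ i))} ⊔ Ideal.span {(X 3 : Rp K) ^ 2}) : Ideal (Rp K)) ↔
      ∀ i : P × Bool, fn k₀ t i.1 i.2 f = 0 := by
    intro k f hf
    simp only [Ideal.mem_iInf, mem_scheme_iff _ _ _ _ hf]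
    constructor
    · rintro h ⟨p, c⟩
      have := h (σ.symm p)
      rw [σ.apply_symm_apply] at this
      cases c
      · exact this.1
      · exact this.2
    · intro h i
      exact ⟨h (σ i, false), h (σ i, true)⟩
  refine ⟨fun i => form1 ((σ i).1.1 : K) (mm t (σ i)), fun i => form2 ((σ i).1.2 : K) (nn t (σ i)),
    X 3, ?_, ?_, ?_, ?_, hX 3, X_ne_zero 3, ?_, ?_⟩
  · exact fun i => ((isHomogeneous_X K _).sub (isHomogeneous_C_mul_X _ _)).sub
      (isHomogeneous_C_mul_X _ _)
  · exact fun i => ((isHomogeneous_X K _).sub (isHomogeneous_C_mul_X _ _)).sub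
      (isHomogeneous_C_mul_X _ _)
  · intro i
    rw [LinearIndependent.pair_iff]
    intro x y hxy
    have h1 := congrArg (aeval (![0, 1, 0, 0] : Fin 4 → K)) hxy
    have h2 := congrArg (aeval (![0, 0, 1, 0] : Fin 4 → K)) hxy
    simp [form1, form2] at h1 h2
    exact ⟨h1, h2⟩
  · intro i j hij
    refine span_forms _ _ _ _ _ _ _ _ fun h => hskew (σ i, σ j) ⟨?_, h⟩
    exact fun h' => hij (σ.injective h')
  · intro i hi
    obtain ⟨c, d, h⟩ := Ideal.mem_span_pair.1 hi
    -- Evaluate at the point `(0, m, n, 1)` of the line.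
    have := congrArg (aeval (![0, mm t (σ i), nn t (σ i), 1] : Fin 4 → K)) h
    simp [form1, form2] at this
  · intro k
    have hleft : (∀ f ∈ homogeneousSubmodule (Fin 4) K k,
        (∀ i : P × Bool, fn k₀ t i.1 i.2 f = 0) → f ∈ Ideal.span {(X 3 : Rp K) ^ 2}) →
        homogeneousSubmodule (Fin 4) K k ⊓ Submodule.restrictScalars K
          (⨅ i, (Ideal.span {form1 ((σ i).1.1 : K) (mm t (σ i)),
            form2 ((σ i).1.2 : K) (nn t (σ i))} ⊔ Ideal.span {(X 3 : Rp K) ^ 2}) : Ideal (Rp K)) =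
        homogeneousSubmodule (Fin 4) K k ⊓
          Submodule.restrictScalars K (Ideal.span {(X 3 : Rp K) ^ 2}) := by
      intro h
      ext f
      simp only [Submodule.mem_inf, Submodule.restrictScalars_mem]
      refine and_congr_right fun hf => ?_
      rw [hscheme k f hf]
      exact ⟨h f hf, fun h' i => fn_sq _ _ _ _ _ h'⟩
    have hright : (∀ y : P × Bool → K, ∃ v ∈ homogeneousSubmodule (Fin 4) K k,
        ∀ i : P × Bool, fn k₀ t i.1 i.2 v = y i) →
        finrank K ↥(homogeneousSubmodule (Fin 4) K k) -
          finrank K ↥(homogeneousSubmodule (Fin 4) K k ⊓ Submodule.restrictScalars K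
            (⨅ i, (Ideal.span {form1 ((σ i).1.1 : K) (mm t (σ i)),
              form2 ((σ i).1.2 : K) (nn t (σ i))} ⊔ Ideal.span {(X 3 : Rp K) ^ 2}) :
                Ideal (Rp K))) = 2 * r := by
      intro h
      rw [finrank_of_surj k (fun i : P × Bool => fn k₀ t i.1 i.2) _ (hscheme k) h]
      simp [hcard, mul_comm]
    rcases lt_trichotomy k k₀ with hk | rfl | hk
    · exact Or.inl (hleft fun f hf h => inj_low k₀ P hP t hk hf h)
    · exact hcrit.symm.imp hleft hright
    · exact Or.inr (hright (surj_high k₀ P hP t hk))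
end
end

section
/- For every r ≥ 1 there exist pairwise disjoint lines in ℙ³ with ideals P₁,…,P_r and a linear form L ∈ [R]₁ such that, for the Hartshorne–Rao module M(C) of their union C, the multiplication map ×L² : [M(C)]_{t−2} → [M(C)]_t has maximal rank (is injective or surjective) for every integer t. (Existential formulation of: for a general union of r skew lines, multiplication by the square of a general linear form on M(C) has maximal rank in every degree.) -/
/-!
Let `L = x₃`, let the lines be `C₁,…,C_r`, none of them inside the plane `x₃ = 0`, and put
`D = ⊕ᵢ R/Pᵢ`. The key reduction is that `×L² : [M(C)]_t → [M(C)]_{t+2}` is injective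
(respectively surjective) as soon as `[R/L²R]_{t+2} → [D/L²D]_{t+2}` is (`maxRank`). For
surjectivity this holds because the cokernels agree. For injectivity: if `L²x` is the image of
`f ∈ R`, then the map on the quotients kills `f`, so `f = L²g`, and `x` is the image of `g`
because `L` is a nonzerodivisor modulo every `Pᵢ`. So it suffices that restriction to `r` length-two
subschemes of the double plane `x₃² = 0` has maximal rank in every degree.

The line with parameters `(s, c)` joins `(1, s, s^N, 0)` to the point
`(0, c, c N s^(N-1), 1)`: its direction, modulo the plane, is `c` times the tangent
of the curve `y ↦ (1, y, y^N)`. Restricting a form `f` to `(1, y, y^N, ε)` with `ε² = 0` gives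
`g + h ε` with `g, h ∈ K[y]` (`Gam`), and the restriction of `f` to the length-two scheme of the
line `(s, c)` is the pair `(g(s), h(s) + c g'(s))` (`theta_eq_Gam`). In degree `d < N` no information
is lost: `f ↦ (g, h)` has kernel `x₃² R` (`sq_dvd_of_Gam`), and its image is `A_d × A_{d-1}`, where `A_d` is
spanned by the `y^(i+Nj)` with `i + j ≤ d`.

The lines are chosen one at a time (`exists_points`), keeping maximal rank of the evaluation maps
on `A_d × A_{d-1}` for finitely many `d` simultaneously; a condition holding for all but finitely
many `s`, and then all but finitely many `c`, can be imposed together with finitely many others.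
If the kernel `W` of the current evaluation map on `A_d × A_{d-1}` is nonzero, it contains a pair
with `g ≠ 0`; this uses maximal rank of plain evaluation on `A_{d-1}`, which is carried along in the
induction. If `W` is a line, a new `s` with `g(s) ≠ 0` makes the map injective. Otherwise two
independent pairs in `W` have determinant
`g₁(s) h₂(s) - g₂(s) h₁(s) + c (g₁ g₂' - g₂ g₁')(s)`, which is generically nonzero: in characteristic
zero the Wronskian vanishes only if `g₂` is a multiple of `g₁`, and then `g₁ h₂ - g₂ h₁ ≠ 0`.
So the map stays surjective. Skewness is one more generic condition.

All degrees `d > 2r` follow from `d = 2r`: there the evaluation map is not injective, since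
`∏ (y - sᵢ)²` is in its kernel, so it is surjective, and surjectivity passes to larger `d`
because the `A_d` increase. Hence `N = 2r + 1` suffices.
-/

open MvPolynomial Module

noncomputable section

variable {K : Type} [Field K]

/-- The product of the coordinate rings of the lines. -/
abbrev Dmod (K : Type) [Field K] {ι : Type} (P : ι → Ideal (Rp K)) :=
  (i : ι) → (Rp K ⧸ P i)

/-- The natural map `R → ⊕ᵢ R/Pᵢ`. -/
def Phi {ι : Type} (P : ι → Ideal (Rp K)) : Rp K →ₗ[Rp K] Dmod K P :=
  LinearMap.pi fun i => (P i).mkQ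

/-- The Hartshorne–Rao module of the union of the (disjoint) lines with ideals `Pᵢ`:
the cokernel of `R → ⊕ᵢ R/Pᵢ`. -/
abbrev HRmod {ι : Type} (P : ι → Ideal (Rp K)) :=
  Dmod K P ⧸ LinearMap.range (Phi P)

/-- The degree-`t` component `[M(C)]_t = coker([R]_t → ⊕ᵢ [R/Pᵢ]_t)` of the
Hartshorne–Rao module, realized as a `K`-subspace of the cokernel module. -/
def HRcomp {ι : Type} (P : ι → Ideal (Rp K)) (t : ℕ) : Submodule K (HRmod P) :=
  Submodule.map ((LinearMap.range (Phi P)).mkQ.restrictScalars K)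
    (Submodule.pi Set.univ fun i =>
      Submodule.map (((P i).mkQ).restrictScalars K) (homogeneousSubmodule (Fin 4) K t))

/-- `×L^m : [M(C)]_{t-m} → [M(C)]_t` has maximal rank (is injective or surjective)
for every integer `t` (in degrees where the source is zero this is automatic). -/
def MaxRankPow {ι : Type} (P : ι → Ideal (Rp K)) (L : Rp K) (m : ℕ) : Prop :=
  ∀ t : ℕ,
    (∀ x ∈ HRcomp P t, (L ^ m) • x = 0 → x = 0) ∨
    (∀ y ∈ HRcomp P (t + m), ∃ x ∈ HRcomp P t, (L ^ m) • x = y)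

/-! ### Evaluation of pairs of one-variable polynomials -/

section OneVariable

open Filter

/-- In characteristic zero, polynomials with vanishing Wronskian are proportional: after division
by the gcd, both become constant. -/
theorem wronskian_zero {K : Type} [Field K] [CharZero K] {g₁ g₂ : Polynomial K} (h1 : g₁ ≠ 0)
    (hw : g₁ * Polynomial.derivative g₂ - g₂ * Polynomial.derivative g₁ = 0) : ∃ k : K, g₂ = Polynomial.C k * g₁ := by
  classical
  obtain ⟨a, ha⟩ := EuclideanDomain.gcd_dvd_left g₁ g₂
  obtain ⟨b, hb⟩ := EuclideanDomain.gcd_dvd_right g₁ g₂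
  set d := EuclideanDomain.gcd g₁ g₂ with hd
  have hd0 : d ≠ 0 := by
    intro h; rw [h, zero_mul] at ha; exact h1 ha
  have hcop : IsCoprime a b := by
    have := EuclideanDomain.gcd_eq_gcd_ab g₁ g₂
    refine ⟨EuclideanDomain.gcdA g₁ g₂, EuclideanDomain.gcdB g₁ g₂, ?_⟩
    apply mul_left_cancel₀ hd0
    rw [← hd] at this
    linear_combination (-1 : Polynomial K) * this - EuclideanDomain.gcdA g₁ g₂ * ha
      - EuclideanDomain.gcdB g₁ g₂ * hb
  have hw' : Polynomial.wronskian a b = 0 := by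
    have h2 : d ^ 2 * Polynomial.wronskian a b = 0 := by
      rw [← hw, ha, hb]
      simp only [Polynomial.wronskian, Polynomial.derivative_mul]
      ring
    exact (mul_eq_zero.mp h2).resolve_left (pow_ne_zero 2 hd0)
  obtain ⟨h3, h4⟩ := (IsCoprime.wronskian_eq_zero_iff hcop).mp hw'
  have h3' := Polynomial.eq_C_of_derivative_eq_zero h3
  have h4' := Polynomial.eq_C_of_derivative_eq_zero h4
  have ha0 : a.coeff 0 ≠ 0 := by
    intro h; rw [h] at h3'; rw [h3'] at ha; simp at ha; exact h1 ha
  refine ⟨b.coeff 0 / a.coeff 0, ?_⟩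
  rw [hb, ha, h4', h3']
  rw [mul_left_comm, ← Polynomial.C_mul]
  simp [ha0]

theorem eventually_eval_ne {K : Type} [Field K] {p : Polynomial K} (hp : p ≠ 0) :
    ∀ᶠ s in cofinite, p.eval s ≠ 0 := by
  rw [eventually_cofinite]
  simpa using p.rootSet_finite K |>.subset (by
    intro x hx
    simp only [Set.mem_ofPred_eq] at hx
    simp [Polynomial.mem_rootSet, hp, hx])


theorem eventually_affine_ne {a b : K} (hb : b ≠ 0) : ∀ᶠ c in cofinite, a + b * c ≠ 0 := by
  have h : (Polynomial.C a + Polynomial.C b * Polynomial.X : Polynomial K) ≠ 0 := by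
    intro h
    apply hb
    simpa using congrArg (fun p => Polynomial.coeff p 1) h
  filter_upwards [eventually_eval_ne h] with c hc
  simpa using hc

/-- Evaluation at the first coordinates of the `q i` has maximal rank on `B`. -/
def GoodB {n : ℕ} (q : Fin n → K × K) (B : Submodule K (Polynomial K)) : Prop :=
  (∀ h ∈ B, (∀ i, h.eval (q i).1 = 0) → h = 0) ∨
  (∀ u : Fin n → K, ∃ h ∈ B, ∀ i, h.eval (q i).1 = u i)

/-- The map `(g, h) ↦ (g(sᵢ), h(sᵢ) + cᵢ g'(sᵢ))ᵢ` on `A × B`, where `q i = (sᵢ, cᵢ)`, is injective. -/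
def InjE {n : ℕ} (q : Fin n → K × K) (A B : Submodule K (Polynomial K)) : Prop :=
  ∀ g ∈ A, ∀ h ∈ B, (∀ i, g.eval (q i).1 = 0) →
    (∀ i, h.eval (q i).1 + (q i).2 * (Polynomial.derivative g).eval (q i).1 = 0) → g = 0 ∧ h = 0

/-- The map `(g, h) ↦ (g(sᵢ), h(sᵢ) + cᵢ g'(sᵢ))ᵢ` from `A × B` to `(K²)^n`, where
`q i = (sᵢ, cᵢ)`, is surjective. -/
def SurjE {n : ℕ} (q : Fin n → K × K) (A B : Submodule K (Polynomial K)) : Prop :=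
  ∀ u v : Fin n → K, ∃ g ∈ A, ∃ h ∈ B, (∀ i, g.eval (q i).1 = u i) ∧
    (∀ i, h.eval (q i).1 + (q i).2 * (Polynomial.derivative g).eval (q i).1 = v i)

theorem goodB_step {n : ℕ} {q : Fin n → K × K} {B : Submodule K (Polynomial K)} (hq : GoodB q B) :
    ∀ᶠ s in cofinite, ∀ c, GoodB (Fin.cons (s, c) q : Fin (n + 1) → K × K) B := by
  by_cases hinj : ∀ h ∈ B, (∀ i, h.eval (q i).1 = 0) → h = 0
  · refine Eventually.of_forall fun s c => Or.inl fun h hB h0 => hinj h hB fun i => ?_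
    simpa using h0 i.succ
  · have hs := hq.resolve_left hinj
    push Not at hinj
    obtain ⟨b, hbB, hb0, hb⟩ := hinj
    filter_upwards [eventually_eval_ne hb] with s hs' c
    refine Or.inr fun u => ?_
    obtain ⟨h, hB, hh⟩ := hs (fun i => u i.succ)
    refine ⟨h + ((u 0 - h.eval s) / b.eval s) • b, B.add_mem hB (B.smul_mem _ hbB), ?_⟩
    rw [Fin.forall_fin_succ]
    refine ⟨by simp [hs'], fun i => by simp [hh, hb0]⟩

theorem injE_cons {n : ℕ} {q : Fin n → K × K} {A B : Submodule K (Polynomial K)} (hq : InjE q A B)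
    (p : K × K) : InjE (Fin.cons p q : Fin (n + 1) → K × K) A B := by
  intro g hg h hh h1 h2
  exact hq g hg h hh (fun i => by simpa using h1 i.succ) (fun i => by simpa using h2 i.succ)

/-- Surjectivity survives a new point `(s, c)` if two pairs in the kernel have a nonzero determinant
at the two new conditions; `x` and `y` are the coefficients given by Cramer's rule. -/
theorem surjE_cons {n : ℕ} {q : Fin n → K × K} {A B : Submodule K (Polynomial K)} (hq : SurjE q A B)
    {s c : K} {g₁ h₁ g₂ h₂ : Polynomial K} (hg₁ : g₁ ∈ A) (hh₁ : h₁ ∈ B) (hg₂ : g₂ ∈ A) (hh₂ : h₂ ∈ B)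
    (z₁ : ∀ i, g₁.eval (q i).1 = 0)
    (z₁' : ∀ i, h₁.eval (q i).1 + (q i).2 * (Polynomial.derivative g₁).eval (q i).1 = 0)
    (z₂ : ∀ i, g₂.eval (q i).1 = 0)
    (z₂' : ∀ i, h₂.eval (q i).1 + (q i).2 * (Polynomial.derivative g₂).eval (q i).1 = 0)
    (hD : g₁.eval s * (h₂.eval s + c * (Polynomial.derivative g₂).eval s)
      - g₂.eval s * (h₁.eval s + c * (Polynomial.derivative g₁).eval s) ≠ 0) :
    SurjE (Fin.cons (s, c) q : Fin (n + 1) → K × K) A B := by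
  intro u v
  obtain ⟨g, hg, h, hh, e1, e2⟩ := hq (fun i => u i.succ) (fun i => v i.succ)
  set D := g₁.eval s * (h₂.eval s + c * (Polynomial.derivative g₂).eval s)
      - g₂.eval s * (h₁.eval s + c * (Polynomial.derivative g₁).eval s) with hDdef
  set U := u 0 - g.eval s with hU
  set V := v 0 - (h.eval s + c * (Polynomial.derivative g).eval s) with hV
  set x := (U * (h₂.eval s + c * (Polynomial.derivative g₂).eval s) - V * g₂.eval s) / D with hx
  set y := (g₁.eval s * V - (h₁.eval s + c * (Polynomial.derivative g₁).eval s) * U) / D with hy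
  have hxD : x * D = U * (h₂.eval s + c * (Polynomial.derivative g₂).eval s) - V * g₂.eval s := by
    rw [hx]; field_simp
  have hyD : y * D = g₁.eval s * V - (h₁.eval s + c * (Polynomial.derivative g₁).eval s) * U := by
    rw [hy]; field_simp
  refine ⟨g + x • g₁ + y • g₂, A.add_mem (A.add_mem hg (A.smul_mem _ hg₁)) (A.smul_mem _ hg₂),
    h + x • h₁ + y • h₂, B.add_mem (B.add_mem hh (B.smul_mem _ hh₁)) (B.smul_mem _ hh₂), ?_, ?_⟩
  · rw [Fin.forall_fin_succ]
    refine ⟨?_, fun i => by simp [e1, z₁, z₂]⟩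
    apply mul_right_cancel₀ hD
    simp only [Fin.cons_zero, Polynomial.eval_add, Polynomial.eval_smul, smul_eq_mul]
    linear_combination (g₁.eval s) * hxD + (g₂.eval s) * hyD + D * hU - U * hDdef
  · rw [Fin.forall_fin_succ]
    refine ⟨?_, fun i => ?_⟩
    · apply mul_right_cancel₀ hD
      simp only [Fin.cons_zero, Polynomial.eval_add, Polynomial.eval_smul, smul_eq_mul, Polynomial.derivative_add, Polynomial.derivative_smul]
      linear_combination (h₁.eval s + c * (Polynomial.derivative g₁).eval s) * hxD
        + (h₂.eval s + c * (Polynomial.derivative g₂).eval s) * hyD + D * hV - V * hDdef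
    · simp only [Fin.cons_succ, Polynomial.eval_add, Polynomial.eval_smul, smul_eq_mul, Polynomial.derivative_add, Polynomial.derivative_smul]
      linear_combination e2 i + x * z₁' i + y * z₂' i

/-- The determinant of two independent pairs, an affine function of `c` whose slope is the
Wronskian of `g₁` and `g₂`, is generically nonzero. -/
theorem eventually_det_ne [CharZero K] {g₁ h₁ g₂ h₂ : Polynomial K} (hg₁ : g₁ ≠ 0)
    (hind : ∀ k : K, ¬ (g₂ = k • g₁ ∧ h₂ = k • h₁)) :
    ∀ᶠ s in cofinite, ∀ᶠ c in cofinite,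
      g₁.eval s * (h₂.eval s + c * (Polynomial.derivative g₂).eval s)
      - g₂.eval s * (h₁.eval s + c * (Polynomial.derivative g₁).eval s) ≠ 0 := by
  by_cases hw : g₁ * Polynomial.derivative g₂ - g₂ * Polynomial.derivative g₁ = 0
  · obtain ⟨k, rfl⟩ := wronskian_zero hg₁ hw
    have hk : h₂ - k • h₁ ≠ 0 := fun h => hind k ⟨by rw [Polynomial.smul_eq_C_mul], sub_eq_zero.mp h⟩
    filter_upwards [eventually_eval_ne (mul_ne_zero hg₁ hk)] with s hs
    refine Eventually.of_forall fun c => ?_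
    convert hs using 1
    simp
    ring
  · filter_upwards [eventually_eval_ne hw] with s hs
    filter_upwards [eventually_affine_ne (a := g₁.eval s * h₂.eval s - g₂.eval s * h₁.eval s) hs]
      with c hc
    convert hc using 1
    simp
    ring

/-- A general new point preserves maximal rank on `A × B`. -/
theorem goodE_step [CharZero K] {n : ℕ} {q : Fin n → K × K} {A B : Submodule K (Polynomial K)} (hBA : B ≤ A)
    (hB : GoodB q B) (hE : InjE q A B ∨ SurjE q A B) :
    ∀ᶠ s in cofinite, ∀ᶠ c in cofinite,
      InjE (Fin.cons (s, c) q : Fin (n + 1) → K × K) A B ∨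
      SurjE (Fin.cons (s, c) q : Fin (n + 1) → K × K) A B := by
  by_cases hinj : InjE q A B
  · exact Eventually.of_forall fun s => Eventually.of_forall fun c => Or.inl (injE_cons hinj _)
  have hsurj := hE.resolve_left hinj
  have key : ∃ g₁ ∈ A, ∃ h₁ ∈ B, (∀ i, g₁.eval (q i).1 = 0) ∧
    (∀ i, h₁.eval (q i).1 + (q i).2 * (Polynomial.derivative g₁).eval (q i).1 = 0) ∧ g₁ ≠ 0 := by
    unfold InjE at hinj
    push Not at hinj
    obtain ⟨g, hg, h, hh, e1, e2, e3⟩ := hinj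
    by_cases hg0 : g = 0
    · subst hg0
      have hz : ∀ i, h.eval (q i).1 = 0 := fun i => by simpa using e2 i
      rcases hB with hB | hB
      · exact absurd (hB h hh hz) (e3 rfl)
      -- `h ∈ B ≤ A` vanishes at all points and is itself the first entry of a kernel pair
      · obtain ⟨k, hk, hk'⟩ := hB (fun i => - ((q i).2 * (Polynomial.derivative h).eval (q i).1))
        exact ⟨h, hBA hh, k, hk, hz, fun i => by rw [hk']; ring, e3 rfl⟩
    · exact ⟨g, hg, h, hh, e1, e2, hg0⟩
  obtain ⟨g₁, hg₁, h₁, hh₁, z₁, z₁', hg0⟩ := key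
  by_cases hsp : ∀ g ∈ A, ∀ h ∈ B, (∀ i, g.eval (q i).1 = 0) →
      (∀ i, h.eval (q i).1 + (q i).2 * (Polynomial.derivative g).eval (q i).1 = 0) →
      ∃ k : K, g = k • g₁ ∧ h = k • h₁
  · filter_upwards [eventually_eval_ne hg0] with s hs
    refine Eventually.of_forall fun c => Or.inl ?_
    intro g hg h hh e1 e2
    obtain ⟨k, rfl, rfl⟩ := hsp g hg h hh (fun i => by simpa using e1 i.succ)
      (fun i => by simpa using e2 i.succ)
    have := e1 0
    simp [hs] at this
    simp [this]
  · push Not at hsp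
    obtain ⟨g₂, hg₂, h₂, hh₂, z₂, z₂', hne⟩ := hsp
    filter_upwards [eventually_det_ne hg0 (h₁ := h₁) (fun k hk => hne k hk.1 hk.2)] with s hs
    filter_upwards [hs] with c hc
    exact Or.inr (surjE_cons hsurj hg₁ hh₁ hg₂ hh₂ z₁ z₁' z₂ z₂' hc)

/-- The 2×2 determinant that is nonzero exactly when the lines with parameters `p` and `p'` are
skew: eliminating `x₁` and `x₂` from their equations leaves two linear forms in `x₀` and `x₃`. -/
def skewDet (N : ℕ) (p p' : K × K) : K :=
  (p'.1 - p.1) * (p'.2 * (N * p'.1 ^ (N - 1)) - p.2 * (N * p.1 ^ (N - 1)))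
    - (p'.2 - p.2) * (p'.1 ^ N - p.1 ^ N)

/-- As an affine function of `c`, `skewDet N p (s, c)` has as slope a polynomial in `s` with leading
coefficient `N - 1`. -/
theorem skewDet_step [CharZero K] {N : ℕ} (hN : 2 ≤ N) (p : K × K) :
    ∀ᶠ s in cofinite, ∀ᶠ c in cofinite, skewDet N p (s, c) ≠ 0 := by
  obtain ⟨m, rfl⟩ : ∃ m, N = m + 2 := ⟨N - 2, by omega⟩
  have hne : ((Polynomial.X - Polynomial.C p.1) * (Polynomial.C ((m + 2 : ℕ) : K) * Polynomial.X ^ (m + 1)) - (Polynomial.X ^ (m + 2) - Polynomial.C (p.1 ^ (m + 2))) : Polynomial K) ≠ 0 := by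
    intro h
    have := congrArg (fun q => Polynomial.coeff q (m + 2)) h
    have e : ((Polynomial.X - Polynomial.C p.1) * (Polynomial.C ((m + 2 : ℕ) : K) * Polynomial.X ^ (m + 1)) - (Polynomial.X ^ (m + 2) - Polynomial.C (p.1 ^ (m + 2))) : Polynomial K)
      = Polynomial.C ((m + 2 : ℕ) : K) * Polynomial.X ^ (m + 2) - Polynomial.C (p.1 * ((m + 2 : ℕ) : K)) * Polynomial.X ^ (m + 1) - Polynomial.X ^ (m + 2)
        + Polynomial.C (p.1 ^ (m + 2)) := by
      rw [Polynomial.C_mul]; ring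
    simp only [e] at this
    rw [Polynomial.coeff_add, Polynomial.coeff_sub, Polynomial.coeff_sub, Polynomial.coeff_C_mul_X_pow, Polynomial.coeff_C_mul_X_pow, Polynomial.coeff_X_pow,
      Polynomial.coeff_C] at this
    simp at this
    have h2 : ((m + 1 : ℕ) : K) = 0 := by push_cast; linear_combination this
    exact absurd h2 (Nat.cast_ne_zero.mpr (by omega))
  filter_upwards [eventually_eval_ne hne] with s hs
  filter_upwards [eventually_affine_ne (a := skewDet (m + 2) p (s, 0)) hs] with c hc
  convert hc using 1
  simp [skewDet]
  ring

theorem skewDet_symm (N : ℕ) (p p' : K × K) : skewDet N p p' = skewDet N p' p := by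
  simp only [skewDet]; ring

theorem exists_points [CharZero K] {N : ℕ} (hN : 2 ≤ N) (A : ℕ → Submodule K (Polynomial K))
    (hA : Monotone A) (D n : ℕ) : ∃ q : Fin n → K × K,
      (∀ i j, i ≠ j → skewDet N (q i) (q j) ≠ 0) ∧
      ∀ d ∈ Finset.range D, GoodB q (A d) ∧ (InjE q (A (d + 1)) (A d) ∨ SurjE q (A (d + 1)) (A d)) := by
  induction n with
  | zero => exact ⟨Fin.elim0, fun i => i.elim0, fun d _ =>
      ⟨Or.inr fun u => ⟨0, Submodule.zero_mem _, fun i => i.elim0⟩,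
       Or.inr fun u v => ⟨0, Submodule.zero_mem _, 0, Submodule.zero_mem _,
        fun i => i.elim0, fun i => i.elim0⟩⟩⟩
  | succ n ih =>
    obtain ⟨q, hq, hg⟩ := ih
    have e1 : ∀ᶠ s in cofinite, ∀ᶠ c in cofinite, ∀ i, skewDet N (q i) (s, c) ≠ 0 := by
      have := eventually_all.mpr fun i => skewDet_step hN (q i)
      filter_upwards [this] with s hs
      exact eventually_all.mpr hs
    have e2 : ∀ᶠ s in cofinite, ∀ d ∈ Finset.range D, ∀ c,
        GoodB (Fin.cons (s, c) q : Fin (n + 1) → K × K) (A d) :=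
      (eventually_all_finset _).mpr fun d hd => goodB_step (hg d hd).1
    have e3 : ∀ᶠ s in cofinite, ∀ᶠ c in cofinite, ∀ d ∈ Finset.range D,
        InjE (Fin.cons (s, c) q : Fin (n + 1) → K × K) (A (d + 1)) (A d) ∨
        SurjE (Fin.cons (s, c) q : Fin (n + 1) → K × K) (A (d + 1)) (A d) := by
      have := (eventually_all_finset (Finset.range D)).mpr fun d hd =>
        goodE_step (hA (Nat.le_succ d)) (hg d hd).1 (hg d hd).2
      filter_upwards [this] with s hs
      exact (eventually_all_finset _).mpr hs
    obtain ⟨s, h1, h2, h3⟩ := (e1.and (e2.and e3)).exists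
    obtain ⟨c, h1, h3⟩ := (h1.and h3).exists
    refine ⟨Fin.cons (s, c) q, ?_, fun d hd => ⟨h2 d hd c, h3 d hd⟩⟩
    intro i j
    refine Fin.cases ?_ (fun i => ?_) i <;> refine Fin.cases ?_ (fun j => ?_) j
    · simp
    · intro _
      simp only [Fin.cons_zero, Fin.cons_succ]
      rw [skewDet_symm]; exact h1 j
    · intro _
      simpa using h1 i
    · intro hij
      simpa using hq i j (fun h => hij (by rw [h]))

end OneVariable

/-! ### Forms restricted to a line -/

theorem degree_of_mem {d : ℕ} {f : Rp K} (hf : f ∈ homogeneousSubmodule (Fin 4) K d)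
    {m : Fin 4 →₀ ℕ} (hm : m ∈ f.support) : m.degree = d := by
  have := hf (mem_support_iff.mp hm)
  rw [← this]
  exact DFunLike.congr_fun Finsupp.degree_eq_weight_one m

open DualNumber in
/-- Restriction to the length-two scheme cut out by `x₃² = 0` on the line
`x₁ = a x₀ + c x₃`, `x₂ = b x₀ + e x₃`, in the chart `x₀ = 1`. -/
def theta (K : Type) [Field K] (a b c e : K) : Rp K →ₐ[K] DualNumber K :=
  aeval ![1, TrivSqZeroExt.inl a + TrivSqZeroExt.inr c, TrivSqZeroExt.inl b + TrivSqZeroExt.inr e, ε]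

/-- The first equation of the line `x₁ = a x₀ + c x₃`, `x₂ = b x₀ + e x₃`. -/
abbrev lf (a c : K) : Rp K := X 1 - C a * X 0 - C c * X 3
/-- The second equation of the line `x₁ = a x₀ + c x₃`, `x₂ = b x₀ + e x₃`. -/
abbrev lf' (b e : K) : Rp K := X 2 - C b * X 0 - C e * X 3

/-- Restriction to the line `x₁ = a x₀ + c x₃`, `x₂ = b x₀ + e x₃`, as the retraction of `R` onto
`K[x₀, x₃]` whose kernel is the ideal of the line. -/
def psi (K : Type) [Field K] (a b c e : K) : Rp K →ₐ[K] Rp K :=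
  aeval ![X 0, C a * X 0 + C c * X 3, C b * X 0 + C e * X 3, X 3]

theorem psi_X (a b c e : K) (i : Fin 4) : psi K a b c e (X i) =
    ![X 0, C a * X 0 + C c * X 3, C b * X 0 + C e * X 3, X 3] i := by
  simp [psi]

theorem theta_X (a b c e : K) (i : Fin 4) : theta K a b c e (X i) =
    ![1, TrivSqZeroExt.inl a + TrivSqZeroExt.inr c, TrivSqZeroExt.inl b + TrivSqZeroExt.inr e,
      DualNumber.eps] i := by
  simp [theta]

theorem sub_psi_mem (a b c e : K) (f : Rp K) :
    f - psi K a b c e f ∈ Ideal.span {lf a c, lf' b e} := by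
  have h1 : lf a c ∈ Ideal.span {lf a c, lf' b e} := Ideal.subset_span (by simp)
  have h2 : lf' b e ∈ Ideal.span {lf a c, lf' b e} := Ideal.subset_span (by simp)
  induction f using MvPolynomial.induction_on with
  | C k => simp [psi]
  | add p q hp hq =>
    have := Ideal.add_mem _ hp hq
    rw [map_add]; convert this using 1; ring
  | mul_X p i hp =>
    have hX : (X i : Rp K) - psi K a b c e (X i) ∈ Ideal.span {lf a c, lf' b e} := by
      rw [psi_X]
      fin_cases i
      · simp
      · convert h1 using 1; simp; ring
      · convert h2 using 1; simp; ring
      · simp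
    have := Ideal.add_mem _ (Ideal.mul_mem_left _ (X i) hp)
      (Ideal.mul_mem_left _ (psi K a b c e p) hX)
    rw [map_mul]; convert this using 1; ring

theorem psi_eq_zero {a b c e : K} {f : Rp K} (hf : f ∈ Ideal.span {lf a c, lf' b e}) :
    psi K a b c e f = 0 := by
  have : Ideal.span {lf a c, lf' b e} ≤ RingHom.ker (psi K a b c e) := by
    rw [Ideal.span_le]
    rintro x (rfl | rfl) <;>
      simp [RingHom.mem_ker, psi, lf, lf']
  exact this hf

theorem theta_eq_zero {a b c e : K} {f : Rp K} (hf : f ∈ Ideal.span {lf a c, lf' b e}) :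
    theta K a b c e f = 0 := by
  have : Ideal.span {lf a c, lf' b e} ≤ RingHom.ker (theta K a b c e) := by
    rw [Ideal.span_le]
    rintro x (rfl | rfl) <;>
      ext <;> simp [theta, lf, lf', TrivSqZeroExt.algebraMap_eq_inl]
  exact this hf

theorem theta_sq (a b c e : K) (g : Rp K) : theta K a b c e (X 3 ^ 2 * g) = 0 := by
  have : (DualNumber.eps : DualNumber K) ^ 2 = 0 := by
    rw [pow_two, DualNumber.eps_mul_eps]
  rw [map_mul, map_pow, theta_X]
  simp [this]

theorem mem_of_sq_mul_mem {a b c e : K} {g : Rp K}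
    (hg : X 3 ^ 2 * g ∈ Ideal.span {lf a c, lf' b e}) : g ∈ Ideal.span {lf a c, lf' b e} := by
  have h := psi_eq_zero hg
  rw [map_mul, map_pow, psi_X] at h
  have h0 : psi K a b c e g = 0 := by simpa using h
  simpa [h0] using sub_psi_mem a b c e g

/-- A monomial of degree `d` is determined modulo `P + (x₃²)` by its image under `theta`. The exponent
`d - 1` is harmless at `d = 0`, where the second coefficient vanishes. -/
theorem monomial_mod (a b c e : K) (d : ℕ) : ∀ m : Fin 4 →₀ ℕ, m.degree = d → ∃ p ∈ Ideal.span {lf a c, lf' b e},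
    ∃ g, monomial m 1 = C (theta K a b c e (monomial m 1)).fst * X 0 ^ d
      + C (theta K a b c e (monomial m 1)).snd * X 0 ^ (d - 1) * X 3 + p + X 3 ^ 2 * g := by
  induction d with
  | zero =>
    intro m hm
    have : m = 0 := (Finsupp.degree_eq_zero_iff m).mp hm
    subst this
    refine ⟨0, Ideal.zero_mem _, 0, ?_⟩
    have : theta K a b c e (monomial 0 1) = 1 := map_one _
    rw [this]
    simp
  | succ d ih =>
    intro m hm
    obtain ⟨i, hi⟩ : ∃ i, m i ≠ 0 := by
      by_contra! h
      have : m = 0 := by ext i; simp [h]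
      subst this; simp at hm
    obtain ⟨m', rfl⟩ : ∃ m', m = m' + Finsupp.single i 1 := by
      refine ⟨m - Finsupp.single i 1, ?_⟩
      rw [tsub_add_cancel_of_le]
      rw [Finsupp.single_le_iff]; omega
    have hm' : m'.degree = d := by
      simp at hm; exact hm
    obtain ⟨p, hp, g, hg⟩ := ih m' hm'
    have hmul : (monomial (m' + Finsupp.single i 1) 1 : Rp K) = monomial m' 1 * X i := by
      rw [X, monomial_mul, one_mul]
    have hXi := sub_psi_mem a b c e (X i)
    obtain ⟨α, β, hψ, hθ⟩ : ∃ α β : K, psi K a b c e (X i) = C α * X 0 + C β * X 3 ∧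
        theta K a b c e (X i) = TrivSqZeroExt.inl α + TrivSqZeroExt.inr β := by
      rw [psi_X, theta_X]
      fin_cases i
      · exact ⟨1, 0, by simp, by simp⟩
      · exact ⟨a, c, by simp, by simp⟩
      · exact ⟨b, e, by simp, by simp⟩
      · exact ⟨0, 1, by simp, by
          change DualNumber.eps = _
          rw [TrivSqZeroExt.inl_zero, zero_add]; rfl⟩
    rw [hψ] at hXi
    rw [hmul, map_mul, hθ]
    set lam := (theta K a b c e (monomial m' 1)).fst with hlam
    set mu := (theta K a b c e (monomial m' 1)).snd with hmu
    have e1 : (theta K a b c e (monomial m' 1) * (TrivSqZeroExt.inl α + TrivSqZeroExt.inr β)).fst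
      = lam * α := by simp [hlam]
    have e2 : (theta K a b c e (monomial m' 1) * (TrivSqZeroExt.inl α + TrivSqZeroExt.inr β)).snd
      = lam * β + α * mu := by simp [hlam, hmu]; ring
    -- for `d = 0` the exponent `d - 1` is truncated, but then `mu = 0`
    have hcomm : C α * C mu * (X 0 ^ (d - 1) * X 0) = (C α * C mu * X 0 ^ d : Rp K) := by
      rcases d with _ | d
      · have : m' = 0 := (Finsupp.degree_eq_zero_iff m').mp hm'
        have : mu = 0 := by
          rw [hmu, this]
          have : theta K a b c e (monomial 0 1) = 1 := map_one _
          rw [this]; simp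
        simp [this]
      · simp [pow_succ]
    refine ⟨p * X i + (C lam * X 0 ^ d + C mu * X 0 ^ (d - 1) * X 3 + X 3 ^ 2 * g) *
        (X i - (C α * X 0 + C β * X 3)), Ideal.add_mem _ (Ideal.mul_mem_right _ _ hp)
        (Ideal.mul_mem_left _ _ hXi), C mu * C β * X 0 ^ (d - 1) + g * (C α * X 0 + C β * X 3), ?_⟩
    rw [e1, e2, hg]
    simp only [C_mul, C_add, Nat.add_sub_cancel]
    linear_combination (X 3) * hcomm

attribute [local instance] MvPolynomial.gradedAlgebra

theorem homogComp_mem {a b c e : K} {f : Rp K} (d : ℕ) (hf : f ∈ Ideal.span {lf a c, lf' b e}) :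
    homogeneousComponent d f ∈ Ideal.span {lf a c, lf' b e} := by
  have hom : (Ideal.span {lf a c, lf' b e}).IsHomogeneous (homogeneousSubmodule (Fin 4) K) := by
    apply Ideal.homogeneous_span
    have hX : ∀ i : Fin 4, (X i : Rp K) ∈ homogeneousSubmodule (Fin 4) K 1 := fun i => isHomogeneous_X K i
    have hCX : ∀ (k : K) (i : Fin 4), (C k * X i : Rp K) ∈ homogeneousSubmodule (Fin 4) K 1 := fun k i => by
      rw [← smul_eq_C_mul]; exact Submodule.smul_mem _ _ (hX i)
    rintro x (rfl | rfl)
    · exact ⟨1, Submodule.sub_mem _ (Submodule.sub_mem _ (hX _) (hCX _ _)) (hCX _ _)⟩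
    · exact ⟨1, Submodule.sub_mem _ (Submodule.sub_mem _ (hX _) (hCX _ _)) (hCX _ _)⟩
  rw [← decomposition.decompose'_apply]
  exact hom d hf

theorem homogComp_sq_mul (t : ℕ) (g : Rp K) :
    homogeneousComponent (t + 2) (X 3 ^ 2 * g) = X 3 ^ 2 * homogeneousComponent t g := by
  have h : (X 3 ^ 2 : Rp K) ∈ homogeneousSubmodule (Fin 4) K 2 := isHomogeneous_X_pow _ _
  have := DirectSum.coe_decompose_mul_add_of_left_mem (homogeneousSubmodule (Fin 4) K) (b := g) (j := t) h
  rw [add_comm, ← decomposition.decompose'_apply, ← decomposition.decompose'_apply]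
  exact this

/-- A form of degree `t + 2` killed by `theta` lies in `P + x₃² R`, with a form of degree `t` as
cofactor of `x₃²`. -/
theorem exists_of_theta_eq_zero {a b c e : K} {t : ℕ} {f : Rp K}
    (hf : f ∈ homogeneousSubmodule (Fin 4) K (t + 2)) (h0 : theta K a b c e f = 0) :
    ∃ g ∈ homogeneousSubmodule (Fin 4) K t, f - X 3 ^ 2 * g ∈ Ideal.span {lf a c, lf' b e} := by
  have key : ∃ p ∈ Ideal.span {lf a c, lf' b e}, ∃ g, f = C (theta K a b c e f).fst * X 0 ^ (t + 2)
      + C (theta K a b c e f).snd * X 0 ^ (t + 1) * X 3 + p + X 3 ^ 2 * g := by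
    have hf' : ∀ m ∈ f.support, m.degree = t + 2 := fun m hm => degree_of_mem hf hm
    choose! p hp g hg using monomial_mod a b c e (t + 2)
    have hθ : theta K a b c e f = ∑ m ∈ f.support, coeff m f • theta K a b c e (monomial m 1) := by
      conv_lhs => rw [f.as_sum]
      rw [map_sum]
      refine Finset.sum_congr rfl fun m _ => ?_
      rw [← map_smul, smul_monomial, smul_eq_mul, mul_one]
    refine ⟨∑ m ∈ f.support, C (coeff m f) * p m, Ideal.sum_mem _ fun m hm =>
      Ideal.mul_mem_left _ _ (hp m (hf' m hm)), ∑ m ∈ f.support, C (coeff m f) * g m, ?_⟩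
    rw [hθ]
    conv_lhs => rw [f.as_sum]
    rw [TrivSqZeroExt.fst_sum, TrivSqZeroExt.snd_sum, map_sum, map_sum, Finset.sum_mul,
      Finset.sum_mul, Finset.sum_mul, Finset.mul_sum, ← Finset.sum_add_distrib,
      ← Finset.sum_add_distrib, ← Finset.sum_add_distrib]
    refine Finset.sum_congr rfl fun m hm => ?_
    have := hg m (hf' m hm)
    have e : (monomial m (coeff m f) : Rp K) = C (coeff m f) * monomial m 1 := by
      rw [C_mul_monomial, mul_one]
    rw [e, TrivSqZeroExt.fst_smul, TrivSqZeroExt.snd_smul, smul_eq_mul, smul_eq_mul, C_mul, C_mul]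
    conv_lhs => rw [this]
    simp only [Nat.add_succ_sub_one]
    ring
  obtain ⟨p, hp, g, hg⟩ := key
  rw [h0] at hg
  refine ⟨homogeneousComponent t g, homogeneousComponent_mem _ _, ?_⟩
  have h2 : homogeneousComponent (t + 2) f = f := homogeneousComponent_of_mem hf |>.trans (by simp)
  have h3 := homogComp_mem (t + 2) (f := f - X 3 ^ 2 * g) (a := a) (b := b) (c := c) (e := e) (by
    have h4 : f - X 3 ^ 2 * g = p := by simpa using sub_eq_of_eq_add hg
    rw [h4]; exact hp)
  rwa [map_sub, h2, homogComp_sq_mul] at h3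

/-! ### Double plane and one-variable polynomials -/

/-- Restriction of a polynomial to `(1, y, y^N, ε)`, that is, to the first-order neighbourhood of
the curve `(1, y, y^N, 0)` in the `x₃`-direction. -/
def Gam (K : Type) [Field K] (N : ℕ) : Rp K →ₐ[K] DualNumber (Polynomial K) :=
  aeval ![1, TrivSqZeroExt.inl Polynomial.X, TrivSqZeroExt.inl (Polynomial.X ^ N), DualNumber.eps]

/-- For the line with parameters `(s, c)`, `theta` is `Gam` followed by the substitution
`y = s + c ε`. -/
theorem theta_eq_Gam (N : ℕ) (s c : K) (f : Rp K) :
    (theta K s (s ^ N) c (c * (N * s ^ (N - 1))) f).fst = (Gam K N f).fst.eval s ∧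
    (theta K s (s ^ N) c (c * (N * s ^ (N - 1))) f).snd = (Gam K N f).snd.eval s
      + c * (Polynomial.derivative (Gam K N f).fst).eval s := by
  induction f using MvPolynomial.induction_on with
  | C k =>
    simp [Gam, theta, TrivSqZeroExt.algebraMap_eq_inl']
  | add p q hp hq =>
    simp only [map_add, TrivSqZeroExt.fst_add, TrivSqZeroExt.snd_add, Polynomial.eval_add, hp, hq]
    simp only [true_and]
    ring
  | mul_X p i hp =>
    have hX : (theta K s (s ^ N) c (c * (N * s ^ (N - 1))) (X i)).fst = (Gam K N (X i)).fst.eval s ∧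
      (theta K s (s ^ N) c (c * (N * s ^ (N - 1))) (X i)).snd = (Gam K N (X i)).snd.eval s
      + c * (Polynomial.derivative (Gam K N (X i)).fst).eval s := by
      fin_cases i <;> simp [Gam, theta, Polynomial.derivative_X_pow]
    simp only [map_mul, TrivSqZeroExt.fst_mul, TrivSqZeroExt.snd_mul, Polynomial.eval_add,
      Polynomial.eval_mul, hp, hX, Polynomial.derivative_mul, smul_eq_mul,
      MulOpposite.smul_eq_mul_unop, MulOpposite.unop_op]
    simp only [true_and]
    ring

/-- The span of the `y^(i + N j)` with `i + j ≤ d`: the restrictions of the plane forms of degree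
`d` to the curve `(1, y, y^N)`. -/
def Asub (K : Type) [Field K] (N d : ℕ) : Submodule K (Polynomial K) :=
  Submodule.span K {p | ∃ i j : ℕ, i + j ≤ d ∧ p = Polynomial.X ^ (i + N * j)}

theorem Asub_mono (N : ℕ) : Monotone (Asub K N) := by
  intro d d' h
  apply Submodule.span_mono
  rintro p ⟨i, j, hij, rfl⟩
  exact ⟨i, j, hij.trans h, rfl⟩

theorem Gam_monomial (N : ℕ) (m : Fin 4 →₀ ℕ) (k : K) : Gam K N (monomial m k) =
    k • (TrivSqZeroExt.inl (Polynomial.X ^ (m 1 + N * m 2)) * DualNumber.eps ^ (m 3)) := by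
  rw [Gam, aeval_monomial, Algebra.smul_def, Finsupp.prod_fintype _ _ (by simp)]
  simp [Fin.prod_univ_four, pow_add, pow_mul, mul_assoc, TrivSqZeroExt.inl_pow]

theorem Gam_mem {N d : ℕ} {f : Rp K} (hf : f ∈ homogeneousSubmodule (Fin 4) K (d + 1)) :
    (Gam K N f).fst ∈ Asub K N (d + 1) ∧ (Gam K N f).snd ∈ Asub K N d := by
  have hf' : ∀ m ∈ f.support, m 0 + m 1 + m 2 + m 3 = d + 1 := fun m hm => by
    rw [← degree_of_mem hf hm, Finsupp.degree_eq_sum, Fin.sum_univ_four]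
  rw [f.as_sum, map_sum, TrivSqZeroExt.fst_sum, TrivSqZeroExt.snd_sum]
  refine ⟨Submodule.sum_mem _ fun m hm => ?_, Submodule.sum_mem _ fun m hm => ?_⟩
  · rw [Gam_monomial, TrivSqZeroExt.fst_smul]
    refine Submodule.smul_mem _ _ ?_
    rcases h3 : m 3 with _ | k
    · simp
      exact Submodule.subset_span ⟨m 1, m 2, by have := hf' m hm; omega, rfl⟩
    · simp [pow_succ]
  · rw [Gam_monomial, TrivSqZeroExt.snd_smul]
    refine Submodule.smul_mem _ _ ?_
    rcases h3 : m 3 with _ | _ | k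
    · simp
    · simp
      exact Submodule.subset_span ⟨m 1, m 2, by have := hf' m hm; omega, rfl⟩
    · simp [pow_succ, mul_assoc]

theorem exists_Gam {N d : ℕ} {g h : Polynomial K} (hg : g ∈ Asub K N (d + 1)) (hh : h ∈ Asub K N d) :
    ∃ f ∈ homogeneousSubmodule (Fin 4) K (d + 1), (Gam K N f).fst = g ∧ (Gam K N f).snd = h := by
  have key : ∀ (k n : ℕ), ∀ g ∈ Asub K N n, ∃ f ∈ homogeneousSubmodule (Fin 4) K (n + k),
      Gam K N f = TrivSqZeroExt.inl g * DualNumber.eps ^ k := by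
    intro k n g hg
    induction hg using Submodule.span_induction with
    | mem x hx =>
      obtain ⟨i, j, hij, rfl⟩ := hx
      refine ⟨X 0 ^ (n - i - j) * X 1 ^ i * X 2 ^ j * X 3 ^ k, ?_, ?_⟩
      · have := (((isHomogeneous_X_pow (R := K) (0 : Fin 4) (n - i - j)).mul
          (isHomogeneous_X_pow (R := K) (1 : Fin 4) i)).mul
          (isHomogeneous_X_pow (R := K) (2 : Fin 4) j)).mul
          (isHomogeneous_X_pow (R := K) (3 : Fin 4) k)
        rw [mem_homogeneousSubmodule]
        convert this using 1
        omega
      · simp [Gam, pow_add, pow_mul, TrivSqZeroExt.inl_pow]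
    | zero => exact ⟨0, Submodule.zero_mem _, by simp⟩
    | add x y _ _ hx hy =>
      obtain ⟨f, hf, hf'⟩ := hx
      obtain ⟨f₂, hf₂, hf₂'⟩ := hy
      exact ⟨f + f₂, Submodule.add_mem _ hf hf₂, by
        rw [map_add, hf', hf₂', TrivSqZeroExt.inl_add, add_mul]⟩
    | smul a x _ hx =>
      obtain ⟨f, hf, hf'⟩ := hx
      exact ⟨a • f, Submodule.smul_mem _ _ hf, by
        rw [map_smul, hf', TrivSqZeroExt.inl_smul, smul_mul_assoc]⟩
  obtain ⟨f₁, hf₁, e₁⟩ := key 0 _ g hg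
  obtain ⟨f₂, hf₂, e₂⟩ := key 1 _ h hh
  refine ⟨f₁ + f₂, Submodule.add_mem _ hf₁ hf₂, ?_, ?_⟩
  · rw [map_add, e₁, e₂]; simp
  · rw [map_add, e₁, e₂]; simp

/-- In degrees below `N`, the exponents `m 1 + N * m 2` and `m 3` determine the monomial `m`, so a form
killed by `Gam` has only monomials divisible by `x₃²`. -/
theorem sq_dvd_of_Gam {N d : ℕ} (hd : d < N) {f : Rp K} (hf : f ∈ homogeneousSubmodule (Fin 4) K d)
    (h0 : Gam K N f = 0) : X 3 ^ 2 ∣ f := by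
  have hf' : ∀ m ∈ f.support, m 0 + m 1 + m 2 + m 3 = d := fun m hm => by
    rw [← degree_of_mem hf hm, Finsupp.degree_eq_sum, Fin.sum_univ_four]
  have inj : ∀ m ∈ f.support, ∀ m' ∈ f.support, m 3 = m' 3 → m 1 + N * m 2 = m' 1 + N * m' 2 →
      m = m' := by
    intro m hm m' hm' h3 h12
    have a1 := hf' m hm
    have a2 := hf' m' hm'
    have b1 : m 1 = m' 1 := by
      have := congrArg (· % N) h12
      simpa [Nat.add_mul_mod_self_left, Nat.mod_eq_of_lt (show m 1 < N by omega),
        Nat.mod_eq_of_lt (show m' 1 < N by omega)] using this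
    have b2 : m 2 = m' 2 := by
      rw [b1] at h12
      exact Nat.eq_of_mul_eq_mul_left (by omega) (Nat.add_left_cancel h12)
    ext i
    fin_cases i
    · show m 0 = m' 0
      omega
    · exact b1
    · exact b2
    · exact h3
  have hcoef : ∀ m, m 3 < 2 → coeff m f = 0 := by
    intro m hm3
    by_contra hne
    have hm : m ∈ f.support := mem_support_iff.mpr hne
    have hG : Gam K N f = ∑ m' ∈ f.support, coeff m' f •
        (TrivSqZeroExt.inl (Polynomial.X ^ (m' 1 + N * m' 2)) * DualNumber.eps ^ (m' 3)) := by
      conv_lhs => rw [f.as_sum]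
      rw [map_sum]
      exact Finset.sum_congr rfl fun m' _ => Gam_monomial N m' _
    rw [h0] at hG
    apply hne
    obtain h3 | h3 : m 3 = 0 ∨ m 3 = 1 := by omega
    · have := congrArg (fun z => Polynomial.coeff (TrivSqZeroExt.fst z) (m 1 + N * m 2)) hG
      simp only [TrivSqZeroExt.fst_sum, Polynomial.finsetSum_coeff, TrivSqZeroExt.fst_zero, Polynomial.coeff_zero] at this
      rw [Finset.sum_eq_single_of_mem m hm] at this
      · rw [this]
        simp [h3]
      · intro m' hm' hmm
        rcases h3' : m' 3 with _ | k
        · have : m 1 + N * m 2 ≠ m' 1 + N * m' 2 := fun h =>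
            hmm (inj m hm m' hm' (by omega) h).symm
          simp [Polynomial.coeff_X_pow, this]
        · simp [pow_succ]
    · have := congrArg (fun z => Polynomial.coeff (TrivSqZeroExt.snd z) (m 1 + N * m 2)) hG
      simp only [TrivSqZeroExt.snd_sum, Polynomial.finsetSum_coeff, TrivSqZeroExt.snd_zero, Polynomial.coeff_zero] at this
      rw [Finset.sum_eq_single_of_mem m hm] at this
      · rw [this]
        simp [h3]
      · intro m' hm' hmm
        rcases h3' : m' 3 with _ | _ | k
        · simp
        · have : m 1 + N * m 2 ≠ m' 1 + N * m' 2 := fun h =>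
            hmm (inj m hm m' hm' (by omega) h).symm
          simp [Polynomial.coeff_X_pow, this]
        · simp [pow_succ, mul_assoc]
  rw [X_pow_eq_monomial, monomial_one_dvd_iff_modMonomial_eq_zero]
  ext m
  by_cases hm : Finsupp.single 3 2 ≤ m
  · rw [coeff_modMonomial_of_le _ hm, coeff_zero]
  · rw [coeff_modMonomial_of_not_le _ hm, coeff_zero]
    apply hcoef
    rw [Finsupp.single_le_iff] at hm
    omega

/-! ### Conclusion for all degrees -/

/-- The square of `∏ (y - sᵢ)` has degree `2n` and is killed by all conditions. -/
theorem not_injE {n N : ℕ} (q : Fin n → K × K) (B : Submodule K (Polynomial K)) :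
    ¬ InjE q (Asub K N (2 * n)) B := by
  intro h
  have hmonic : ((∏ i, (Polynomial.X - Polynomial.C (q i).1)) ^ 2 : Polynomial K).Monic :=
    (Polynomial.monic_prod_of_monic _ _ fun i _ => Polynomial.monic_X_sub_C _).pow 2
  have hz : ∀ i, (∏ i, (Polynomial.X - Polynomial.C (q i).1) : Polynomial K).eval (q i).1 = 0 := by
    intro i
    rw [Polynomial.eval_prod]
    exact Finset.prod_eq_zero (Finset.mem_univ i) (by simp)
  refine hmonic.ne_zero (h _ ?_ 0 (Submodule.zero_mem _) (fun i => ?_) (fun i => ?_)).1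
  · have hdeg : ((∏ i, (Polynomial.X - Polynomial.C (q i).1)) ^ 2 : Polynomial K).natDegree ≤ 2 * n := by
      refine Polynomial.natDegree_pow_le.trans ?_
      rw [Polynomial.natDegree_prod_of_monic _ _ fun i _ => Polynomial.monic_X_sub_C _]
      simp
    rw [Polynomial.as_sum_range' _ (2 * n + 1) (Nat.lt_succ_of_le hdeg)]
    refine Submodule.sum_mem _ fun k hk => ?_
    rw [← Polynomial.C_mul_X_pow_eq_monomial, ← Polynomial.smul_eq_C_mul]
    refine Submodule.smul_mem _ _ (Submodule.subset_span ⟨k, 0, ?_, by simp⟩)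
    simp at hk; omega
  · rw [Polynomial.eval_pow, hz]; simp
  · rw [Polynomial.derivative_pow]
    simp [hz]

theorem SurjE.mono {n : ℕ} {q : Fin n → K × K} {A B A' B' : Submodule K (Polynomial K)}
    (h : SurjE q A B) (hA : A ≤ A') (hB : B ≤ B') : SurjE q A' B' := by
  intro u v
  obtain ⟨g, hg, k, hk, e⟩ := h u v
  exact ⟨g, hA hg, k, hB hk, e⟩

theorem exists_points_all [CharZero K] (r : ℕ) (hr : 1 ≤ r) : ∃ q : Fin r → K × K,
    (∀ i j, i ≠ j → skewDet (2 * r + 1) (q i) (q j) ≠ 0) ∧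
    ∀ t, (t + 2 < 2 * r + 1 ∧ InjE q (Asub K (2 * r + 1) (t + 2)) (Asub K (2 * r + 1) (t + 1))) ∨
      SurjE q (Asub K (2 * r + 1) (t + 2)) (Asub K (2 * r + 1) (t + 1)) := by
  obtain ⟨q, hq, hg⟩ := exists_points (N := 2 * r + 1) (by omega) _ (Asub_mono (K := K) (2 * r + 1)) (2 * r) r
  refine ⟨q, hq, fun t => ?_⟩
  by_cases ht : t + 1 < 2 * r
  · rcases (hg (t + 1) (Finset.mem_range.mpr ht)).2 with h | h
    · exact Or.inl ⟨by omega, h⟩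
    · exact Or.inr h
  · right
    obtain ⟨m, hm⟩ : ∃ m, 2 * r = m + 1 := ⟨2 * r - 1, by omega⟩
    have h := (hg m (Finset.mem_range.mpr (by omega))).2.resolve_left (by
      rw [← hm]; exact not_injE q _)
    exact h.mono (Asub_mono _ (by omega)) (Asub_mono _ (by omega))

theorem lf_mem (a c : K) : lf a c ∈ homogeneousSubmodule (Fin 4) K 1 := by
  have hX : ∀ i : Fin 4, (X i : Rp K) ∈ homogeneousSubmodule (Fin 4) K 1 := fun i => isHomogeneous_X K i
  simp only [lf, ← smul_eq_C_mul]
  exact Submodule.sub_mem _ (Submodule.sub_mem _ (hX _) (Submodule.smul_mem _ _ (hX _)))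
    (Submodule.smul_mem _ _ (hX _))

theorem lf'_mem (a c : K) : lf' a c ∈ homogeneousSubmodule (Fin 4) K 1 := by
  have hX : ∀ i : Fin 4, (X i : Rp K) ∈ homogeneousSubmodule (Fin 4) K 1 := fun i => isHomogeneous_X K i
  simp only [lf', ← smul_eq_C_mul]
  exact Submodule.sub_mem _ (Submodule.sub_mem _ (hX _) (Submodule.smul_mem _ _ (hX _)))
    (Submodule.smul_mem _ _ (hX _))

theorem lf_indep (a b c e : K) : LinearIndependent K ![lf a c, lf' b e] := by
  rw [LinearIndependent.pair_iff]
  intro x y h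
  have h1 := congrArg (aeval ![(0 : K), 1, 0, 0]) h
  have h2 := congrArg (aeval ![(0 : K), 0, 1, 0]) h
  simp [lf, lf'] at h1 h2
  exact ⟨h1, h2⟩

theorem skew_span {a b c e a' b' c' e' : K} (hD : (a' - a) * (e' - e) - (c' - c) * (b' - b) ≠ 0) :
    Submodule.span K {lf a c, lf' b e, lf a' c', lf' b' e'} = homogeneousSubmodule (Fin 4) K 1 := by
  apply le_antisymm
  · rw [Submodule.span_le]
    rintro x (rfl | rfl | rfl | rfl)
    exacts [lf_mem _ _, lf'_mem _ _, lf_mem _ _, lf'_mem _ _]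
  · rw [homogeneousSubmodule_one_eq_span_X, Submodule.span_le]
    set S := Submodule.span K {lf a c, lf' b e, lf a' c', lf' b' e'} with hS
    have m1 : lf a c ∈ S := Submodule.subset_span (by simp)
    have m2 : lf' b e ∈ S := Submodule.subset_span (by simp)
    have m3 : lf a' c' ∈ S := Submodule.subset_span (by simp)
    have m4 : lf' b' e' ∈ S := Submodule.subset_span (by simp)
    have d1 := S.sub_mem m1 m3
    have d2 := S.sub_mem m2 m4
    set D := (a' - a) * (e' - e) - (c' - c) * (b' - b) with hDdef
    have hDC : (C D⁻¹ * ((C a' - C a) * (C e' - C e) - (C c' - C c) * (C b' - C b)) : Rp K) = 1 := by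
      rw [← C_sub, ← C_sub, ← C_sub, ← C_sub, ← C_mul, ← C_mul, ← C_sub, ← C_mul, ← hDdef,
        inv_mul_cancel₀ hD, C_1]
    have x0 : (X 0 : Rp K) ∈ S := by
      have := S.smul_mem D⁻¹ (S.sub_mem (S.smul_mem (e' - e) d1) (S.smul_mem (c' - c) d2))
      convert this using 1
      simp only [smul_eq_C_mul, lf, lf', C_sub]
      linear_combination -(X 0) * hDC
    have x3 : (X 3 : Rp K) ∈ S := by
      have := S.smul_mem D⁻¹ (S.sub_mem (S.smul_mem (a' - a) d2) (S.smul_mem (b' - b) d1))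
      convert this using 1
      simp only [smul_eq_C_mul, lf, lf', C_sub]
      linear_combination -(X 3) * hDC
    have x1 : (X 1 : Rp K) ∈ S := by
      have := S.add_mem (S.add_mem m1 (S.smul_mem a x0)) (S.smul_mem c x3)
      convert this using 1
      simp only [smul_eq_C_mul, lf]; ring
    have x2 : (X 2 : Rp K) ∈ S := by
      have := S.add_mem (S.add_mem m2 (S.smul_mem b x0)) (S.smul_mem e x3)
      convert this using 1
      simp only [smul_eq_C_mul, lf']; ring
    rintro _ ⟨i, rfl⟩
    fin_cases i
    exacts [x0, x1, x2, x3]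

/-- The reduction from `×x₃²` on the Hartshorne–Rao module to the evaluation maps on
`A_{t+2} × A_{t+1}`. -/
theorem maxRank {r N : ℕ} {q : Fin r → K × K}
    (hq : ∀ t, (t + 2 < N ∧ InjE q (Asub K N (t + 2)) (Asub K N (t + 1))) ∨
      SurjE q (Asub K N (t + 2)) (Asub K N (t + 1))) :
    MaxRankPow (fun i => Ideal.span {lf (q i).1 (q i).2,
      lf' ((q i).1 ^ N) ((q i).2 * (N * (q i).1 ^ (N - 1)))}) (X 3 : Rp K) 2 := by
  intro t
  set P : Fin r → Ideal (Rp K) := fun i => Ideal.span {lf (q i).1 (q i).2,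
      lf' ((q i).1 ^ N) ((q i).2 * (N * (q i).1 ^ (N - 1)))} with hP
  have repr : ∀ {t : ℕ} {x : HRmod P}, x ∈ HRcomp P t → ∃ f : Fin r → Rp K,
      (∀ i, f i ∈ homogeneousSubmodule (Fin 4) K t) ∧
      x = (LinearMap.range (Phi P)).mkQ (fun i => (P i).mkQ (f i)) := by
    rintro t x ⟨D, hD, rfl⟩
    have hD' : ∀ i, ∃ f ∈ homogeneousSubmodule (Fin 4) K t, (P i).mkQ f = D i := fun i =>
      hD i (Set.mem_univ i)
    choose f hf hfD using hD'
    refine ⟨f, hf, ?_⟩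
    have : D = fun i => (P i).mkQ (f i) := funext fun i => (hfD i).symm
    rw [this]; rfl
  rcases hq t with ⟨htN, hinj⟩ | hsurj
  · left
    intro x hx hx0
    obtain ⟨x, hxt, rfl⟩ := repr hx
    rw [← map_smul, Submodule.mkQ_apply, Submodule.Quotient.mk_eq_zero] at hx0
    obtain ⟨f, hf⟩ := hx0
    have hfi : ∀ i, f - X 3 ^ 2 * x i ∈ P i := fun i => by
      have := congrFun hf i
      have h2 : (P i).mkQ f = (P i).mkQ (X 3 ^ 2 * x i) := by
        rw [← smul_eq_mul (X 3 ^ 2) (x i), map_smul]; exact this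
      exact (Submodule.Quotient.eq _).mp h2
    set F := homogeneousComponent (t + 2) f with hF
    have hFt : F ∈ homogeneousSubmodule (Fin 4) K (t + 2) := homogeneousComponent_mem _ _
    have hFi : ∀ i, F - X 3 ^ 2 * x i ∈ P i := fun i => by
      have h1 := homogComp_mem (t + 2) (hfi i)
      have h2 : homogeneousComponent t (x i) = x i :=
        (homogeneousComponent_of_mem (hxt i)).trans (by simp)
      rwa [map_sub, homogComp_sq_mul, h2] at h1
    have hθ : ∀ i, theta K (q i).1 ((q i).1 ^ N) (q i).2 ((q i).2 * (N * (q i).1 ^ (N - 1))) F = 0 :=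
      fun i => by
        have := theta_eq_zero (hFi i)
        rwa [map_sub, theta_sq, sub_zero] at this
    obtain ⟨hg, hh⟩ := Gam_mem (N := N) hFt
    obtain ⟨z1, z2⟩ := hinj _ hg _ hh
      (fun i => by rw [← (theta_eq_Gam N _ (q i).2 F).1, hθ]; rfl)
      (fun i => by rw [← (theta_eq_Gam N _ (q i).2 F).2, hθ]; rfl)
    obtain ⟨g, hgF⟩ := sq_dvd_of_Gam htN hFt (TrivSqZeroExt.ext z1 z2)
    rw [Submodule.mkQ_apply, Submodule.Quotient.mk_eq_zero]
    refine ⟨g, funext fun i => ?_⟩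
    refine (Submodule.Quotient.eq _).mpr ?_
    apply mem_of_sq_mul_mem
    have := hFi i
    rwa [hgF, ← mul_sub] at this
  · right
    intro y hy
    obtain ⟨y, hyt, rfl⟩ := repr hy
    obtain ⟨g, hg, h, hh, e1, e2⟩ := hsurj
      (fun i => (theta K (q i).1 ((q i).1 ^ N) (q i).2 ((q i).2 * (N * (q i).1 ^ (N - 1))) (y i)).fst)
      (fun i => (theta K (q i).1 ((q i).1 ^ N) (q i).2 ((q i).2 * (N * (q i).1 ^ (N - 1))) (y i)).snd)
    obtain ⟨f, hf, rfl, rfl⟩ := exists_Gam hg hh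
    have hθ : ∀ i, theta K (q i).1 ((q i).1 ^ N) (q i).2 ((q i).2 * (N * (q i).1 ^ (N - 1))) (y i - f) = 0 := by
      intro i
      rw [map_sub, sub_eq_zero]
      exact TrivSqZeroExt.ext ((e1 i).symm.trans (theta_eq_Gam N _ (q i).2 f).1.symm)
        ((e2 i).symm.trans (theta_eq_Gam N _ (q i).2 f).2.symm)
    choose x hxt hx using fun i => exists_of_theta_eq_zero (Submodule.sub_mem _ (hyt i) hf) (hθ i)
    refine ⟨(LinearMap.range (Phi P)).mkQ (fun i => (P i).mkQ (x i)),
      ⟨fun i => (P i).mkQ (x i), fun i _ => ⟨x i, hxt i, rfl⟩, rfl⟩, ?_⟩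
    rw [← map_smul]
    symm
    refine (Submodule.Quotient.eq _).mpr ⟨f, funext fun i => ?_⟩
    have : (P i).mkQ f = (P i).mkQ (y i - X 3 ^ 2 * x i) := by
      refine ((Submodule.Quotient.eq _).mpr ?_).symm
      have := hx i
      rwa [sub_right_comm] at this
    change (P i).mkQ f = (P i).mkQ (y i) - (X 3 ^ 2 : Rp K) • (P i).mkQ (x i)
    rw [this, map_sub, ← smul_eq_mul (X 3 ^ 2) (x i), map_smul]

/-- For every `r ≥ 1` there exist `r` pairwise disjoint (skew) lines in `ℙ³` and a
linear form `L` such that multiplication by `L²` on the Hartshorne–Rao module of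
their union has maximal rank in every degree (WLP); existential formulation of the
statement for general skew lines. -/
theorem stmt_8 {K : Type} [Field K] [IsAlgClosed K] [CharZero K]
    (r : ℕ) (hr : 1 ≤ r) :
    ∃ (l l' : Fin r → Rp K) (L : Rp K),
      (∀ i, l i ∈ homogeneousSubmodule (Fin 4) K 1) ∧
      (∀ i, l' i ∈ homogeneousSubmodule (Fin 4) K 1) ∧
      (∀ i, LinearIndependent K ![l i, l' i]) ∧
      -- pairwise skew: the four linear forms of two distinct lines span `[R]₁`
      (∀ i j, i ≠ j →
        Submodule.span K {l i, l' i, l j, l' j} = homogeneousSubmodule (Fin 4) K 1) ∧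
      L ∈ homogeneousSubmodule (Fin 4) K 1 ∧ L ≠ 0 ∧
      MaxRankPow (fun i => Ideal.span {l i, l' i}) L 2 := by
  obtain ⟨q, hq, hg⟩ := exists_points_all (K := K) r hr
  refine ⟨fun i => lf (q i).1 (q i).2,
    fun i => lf' ((q i).1 ^ (2 * r + 1)) ((q i).2 * ((2 * r + 1 : ℕ) * (q i).1 ^ (2 * r + 1 - 1))),
    X 3, fun i => lf_mem _ _, fun i => lf'_mem _ _, fun i => lf_indep _ _ _ _,
    fun i j hij => skew_span (hq i j hij), isHomogeneous_X K 3, X_ne_zero 3, maxRank hg⟩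
end
end
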